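/- arXiv:2511.01782 — 8 statements merged into one kernel-verified Lean document; each statement's English description precedes it below -/
import Mathlib

section
/- Let G be a finite abelian group whose order is not divisible by 2, 3, or 5, and let χ be a generalized character of G such that for every nonidentity element x of G the value χ(x) is a sum of at most two roots of unity. Then there exist an integer a, signs δ₁, δ₂ ∈ {−1, 0, 1}, and irreducible characters λ₁, λ₂ of G such that χ = a·ρ_G + δ₁·λ₁ + δ₂·λ₂ (as functions G → ℂ). -/
/-!
Write `χ = ∑ c_λ λ`. Two facts drive the proof.

*Short relations between roots of unity.* If integer multiples of roots of unity sum to `0`, the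
relation survives raising all the roots to a power prime to their common order `p * L`
(irreducibility of cyclotomic polynomials). Summing over the exponents `1 + t * L`, `t < p`, shows
that when the relation has fewer than `p` terms its terms with `z ^ L = 1` already sum to `0`
(`sum_coset_step`). Iterating over primes (`sum_coset`) splits a relation with `k` terms into
relations inside the cosets of the roots of unity whose order involves only primes `≤ k`. Such a
coset contains at most one `|G|`-th root of unity when all prime divisors of `|G|` exceed `k`.
Hence, if `χ - a ρ` has few constituents, then after cancelling equal values the sum
`∑ (c_λ - a) λ(x)` has at most two terms, counted with multiplicity (`sum_abs_fiber_le`).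

*A variance bound.* Since `|χ(x)| ≤ 2` for `x ≠ 1`, Parseval gives
`N ∑ c_λ² - (∑ c_λ)² ≤ 4 (N - 1)` with `N = |G|`. The left side is
`½ ∑_{λ, μ} (c_λ - c_μ)²`, so some value `a` of `c` satisfies `∑ (c_λ - a)² ≤ 7`, and then
`∑ (c_λ - a)² ≤ 4` if `N ≥ 23`.

It suffices to find `a` with `∑ |c_λ - a| ≤ 2`. If `N ≥ 23` and this fails, then `χ - a ρ` is a
signed sum of three or four distinct characters, so at each `x ≠ 1` some positive and some negative
constituent agree. Thus `G` is covered by at most four subgroups `ker (λ / μ)`, each of index at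
least `7`, which is absurd (`sum_abs_le_of_sum_sq_le`). If `1 < N < 23`, then `N` is a prime and
distinct characters take distinct values at any `x ≠ 1`, so no cancellation occurs
(`sum_abs_le_of_prime`); here `a` has to be chosen so that `χ - a ρ` has fewer than `N - 2`
constituents, which for `N = 7` needs a separate count (`exists_card_ne_le`).
-/


/-- A complex number is a root of unity. -/
def IsRootOfUnity (z : ℂ) : Prop := ∃ n : ℕ, 0 < n ∧ z ^ n = 1

/-- A complex number is a sum of at most two roots of unity. -/
def IsSumAtMostTwoRootsOfUnity (z : ℂ) : Prop :=
  z = 0 ∨ IsRootOfUnity z ∨ ∃ u v : ℂ, IsRootOfUnity u ∧ IsRootOfUnity v ∧ z = u + v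

open Finset Polynomial

/-! ### Relations between roots of unity -/

/-- Integer relations between `M`-th roots of unity are preserved by the Galois conjugation
`z ↦ z ^ k`, `k` prime to `M`, because `ζ` and `ζ ^ k` have the same minimal polynomial. -/
theorem sum_conj_eq_zero {ι : Type*} (s : Finset ι) (c : ι → ℤ) (z : ι → ℂ) {M k : ℕ}
    (hM : 0 < M) (hz : ∀ i ∈ s, z i ^ M = 1) (h : ∑ i ∈ s, (c i : ℂ) * z i = 0)
    (hk : k.Coprime M) : ∑ i ∈ s, (c i : ℂ) * z i ^ k = 0 := by
  have hζ := Complex.isPrimitiveRoot_exp M hM.ne'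
  set ζ := Complex.exp (2 * Real.pi * Complex.I / M)
  have : NeZero M := ⟨hM.ne'⟩
  have hex : ∀ i, ∃ a : ℕ, i ∈ s → ζ ^ a = z i := by
    intro i
    by_cases hi : i ∈ s
    · obtain ⟨a, -, ha⟩ := hζ.eq_pow_of_pow_eq_one (hz i hi)
      exact ⟨a, fun _ => ha⟩
    · exact ⟨0, fun h => absurd h hi⟩
  choose a ha using hex
  let P : ℤ[X] := ∑ i ∈ s, C (c i) * X ^ a i
  have hP : aeval ζ P = 0 := by
    rw [← h, map_sum]
    refine sum_congr rfl fun i hi => ?_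
    simp [ha i hi]
  have hdvd := minpoly.isIntegrallyClosed_dvd (hζ.isIntegral hM) hP
  rw [hζ.minpoly_eq_pow_coprime hk] at hdvd
  have h0 : aeval (ζ ^ k) P = 0 := by
    obtain ⟨Q, hQ⟩ := hdvd
    rw [hQ, map_mul, minpoly.aeval, zero_mul]
  rw [← h0, map_sum]
  refine sum_congr rfl fun i hi => ?_
  simp [← ha i hi, ← pow_mul, mul_comm]

theorem geom_coset_sum {z : ℂ} {p L : ℕ} (hz : z ^ (p * L) = 1) :
    ∑ t ∈ range p, z ^ (1 + t * L) = if z ^ L = 1 then (p : ℂ) * z else 0 := by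
  have h1 : ∀ t, z ^ (1 + t * L) = z * (z ^ L) ^ t := by
    intro t; rw [pow_add, pow_one, mul_comm t, pow_mul]
  simp_rw [h1, ← mul_sum]
  split_ifs with h
  · simp [h, mul_comm]
  · rw [geom_sum_eq h, ← pow_mul, mul_comm L, hz]; simp

theorem sum_sum_pow_eq {ι : Type*} (s : Finset ι) (c : ι → ℤ) (z : ι → ℂ) {p L : ℕ}
    (hz : ∀ i ∈ s, z i ^ (p * L) = 1) :
    ∑ t ∈ range p, ∑ i ∈ s, (c i : ℂ) * z i ^ (1 + t * L)
      = p * ∑ i ∈ s with z i ^ L = 1, (c i : ℂ) * z i := by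
  rw [sum_comm, mul_sum, sum_filter]
  refine sum_congr rfl fun i hi => ?_
  rw [← mul_sum, geom_coset_sum (hz i hi)]
  split_ifs <;> ring

/-- A relation with fewer than `p` terms between `p * L`-th roots of unity restricts to a relation
between those terms that are `L`-th roots of unity. If `p ∣ L`, all the exponents `1 + t * L` are
prime to `p * L` and averaging over them is the projection. If `p ∤ L`, one exponent is bad; its
contribution does not change under multiplying all terms by a `p`-th root of unity, and some such
twist makes the projection empty. -/
theorem sum_coset_step {ι : Type*} (s : Finset ι) (c : ι → ℤ) (z : ι → ℂ) {p L : ℕ}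
    (hp : p.Prime) (hL : 0 < L) (hs : s.card < p)
    (hz : ∀ i ∈ s, z i ^ (p * L) = 1) (h : ∑ i ∈ s, (c i : ℂ) * z i = 0) :
    ∑ i ∈ s with z i ^ L = 1, (c i : ℂ) * z i = 0 := by
  have hp0 : (p : ℂ) ≠ 0 := by exact_mod_cast hp.ne_zero
  have hcop : ∀ t, ¬ p ∣ 1 + t * L → (1 + t * L).Coprime (p * L) := by
    intro t ht
    refine Nat.Coprime.mul_right ((hp.coprime_iff_not_dvd.2 ht).symm) ?_
    simp
  by_cases hpL : p ∣ L
  · have key := sum_sum_pow_eq s c z hz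
    rw [sum_eq_zero] at key
    · exact (mul_eq_zero.1 key.symm).resolve_left hp0
    · intro t _
      refine sum_conj_eq_zero s c z (Nat.mul_pos hp.pos hL) hz h (hcop t fun hd => ?_)
      exact hp.one_lt.ne' (Nat.dvd_one.1 ((Nat.dvd_add_left (hpL.mul_left t)).1 hd))
  · -- exactly one of the exponents `1 + t * L`, `t < p`, is divisible by `p`
    have hinj : ∀ t < p, ∀ t' < p, p ∣ 1 + t * L → p ∣ 1 + t' * L → t = t' := by
      intro t ht t' ht' h1 h2
      have h3 : 1 + t * L ≡ 1 + t' * L [MOD p] :=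
        ((Nat.modEq_zero_iff_dvd.2 h1).trans (Nat.modEq_zero_iff_dvd.2 h2).symm)
      have h4 := Nat.ModEq.cancel_right_of_coprime
        (by simpa using hp.coprime_iff_not_dvd.2 hpL) (Nat.ModEq.add_left_cancel' 1 h3)
      rwa [Nat.ModEq, Nat.mod_eq_of_lt ht, Nat.mod_eq_of_lt ht'] at h4
    obtain ⟨t₀, ht₀, he⟩ : ∃ t < p, p ∣ 1 + t * L := by
      have : Fact p.Prime := ⟨hp⟩
      have hL0 : (L : ZMod p) ≠ 0 := by rwa [Ne, ZMod.natCast_eq_zero_iff]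
      refine ⟨(-(L : ZMod p)⁻¹).val, ZMod.val_lt _, ?_⟩
      rw [← ZMod.natCast_eq_zero_iff]
      push_cast
      rw [ZMod.natCast_zmod_val, neg_mul, inv_mul_cancel₀ hL0]; ring
    have key : ∀ w : ι → ℂ, (∀ i ∈ s, w i ^ (p * L) = 1) → ∑ i ∈ s, (c i : ℂ) * w i = 0 →
        ∑ i ∈ s, (c i : ℂ) * w i ^ (1 + t₀ * L)
          = p * ∑ i ∈ s with w i ^ L = 1, (c i : ℂ) * w i := by
      intro w hw hw0
      rw [← sum_sum_pow_eq s c w hw]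
      symm
      refine sum_eq_single_of_mem t₀ (mem_range.2 ht₀) fun t ht hne => ?_
      refine sum_conj_eq_zero s c w (Nat.mul_pos hp.pos hL) hw hw0 (hcop t fun hd => hne ?_)
      exact hinj t (mem_range.1 ht) t₀ ht₀ hd he
    -- a `p`-th root of unity missed by all the `z i ^ L`
    obtain ⟨η, hη, hη'⟩ : ∃ η ∈ nthRootsFinset p (1 : ℂ), η ∉ s.image fun i => z i ^ L := by
      refine exists_mem_notMem_of_card_lt_card ?_
      rw [(Complex.isPrimitiveRoot_exp p hp.ne_zero).card_nthRootsFinset]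
      exact card_image_le.trans_lt hs
    rw [mem_nthRootsFinset hp.pos] at hη
    obtain ⟨q, hq⟩ := he
    have hηe : η ^ (1 + t₀ * L) = 1 := by rw [hq, pow_mul, hη, one_pow]
    have k1 := key (fun i => z i * η ^ t₀) (fun i hi => by
        rw [mul_pow, hz i hi, ← pow_mul, mul_left_comm, pow_mul, hη]; simp) (by
        simp_rw [← mul_assoc, ← sum_mul, h, zero_mul])
    have k2 := key z hz h
    rw [filter_false_of_mem, sum_empty, mul_zero] at k1
    · have : ∑ i ∈ s, (c i : ℂ) * z i ^ (1 + t₀ * L) = 0 := by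
        rw [← k1]
        refine sum_congr rfl fun i _ => ?_
        rw [mul_pow, ← pow_mul, mul_comm t₀ (1 + _), pow_mul, hηe]; simp
      rw [this] at k2
      exact (mul_eq_zero.1 k2.symm).resolve_left hp0
    · intro i hi h1
      refine hη' (mem_image.2 ⟨i, hi, ?_⟩)
      have h2 : η * (η ^ t₀) ^ L = 1 := by
        rw [← hηe, ← pow_mul, pow_add, pow_one]
      rw [mul_pow] at h1
      have h3 : (η ^ t₀) ^ L ≠ 0 := right_ne_zero_of_mul (h2.trans_ne one_ne_zero)
      exact mul_right_cancel₀ h3 (h1.trans h2.symm)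

/-- Iteration of `sum_coset_step` over the prime factors of `B`. -/
theorem sum_coset {ι : Type*} (c : ι → ℤ) (z : ι → ℂ) {A : ℕ} (hA : 0 < A) (B : ℕ) (hB : 0 < B) :
    ∀ s : Finset ι, (∀ p, p.Prime → p ∣ B → s.card < p) →
    (∀ i ∈ s, z i ^ (A * B) = 1) → ∑ i ∈ s, (c i : ℂ) * z i = 0 →
    ∑ i ∈ s with z i ^ A = 1, (c i : ℂ) * z i = 0 := by
  induction B using induction_on_primes with
  | zero => omega
  | one =>
    intro s _ hz h
    rwa [filter_true_of_mem (by simpa using hz)]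
  | prime_mul p a hp ih =>
    intro s hs hz h
    have ha : 0 < a := Nat.pos_of_mul_pos_left hB
    have h1 := sum_coset_step s c z hp (Nat.mul_pos hA ha) (hs p hp (dvd_mul_right p a))
      (by simpa [mul_left_comm] using hz) h
    have h2 := ih ha (s.filter fun i => z i ^ (A * a) = 1)
      (fun q hq hqa => (card_filter_le _ _).trans_lt (hs q hq (hqa.mul_left p)))
      (fun i hi => (mem_filter.1 hi).2) h1
    rw [filter_filter] at h2
    rw [← h2]
    congr 1
    refine filter_congr fun i _ => ⟨fun h => ⟨by rw [pow_mul, h, one_pow], h⟩, fun h => h.2⟩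

theorem exists_smooth_mul_rough (k m : ℕ) (hm : 0 < m) :
    ∃ A B : ℕ, m = A * B ∧ 0 < A ∧ 0 < B ∧ (∀ p, p.Prime → p ∣ A → p ≤ k) ∧
      ∀ p, p.Prime → p ∣ B → k < p := by
  induction m using induction_on_primes with
  | zero => omega
  | one =>
    refine ⟨1, 1, rfl, one_pos, one_pos, fun p hp h => ?_, fun p hp h => ?_⟩ <;>
    exact absurd (Nat.dvd_one.1 h) hp.ne_one
  | prime_mul p a hp ih =>
    obtain ⟨A, B, rfl, hA, hB, h1, h2⟩ := ih (Nat.pos_of_mul_pos_left hm)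
    by_cases hpk : p ≤ k
    · refine ⟨p * A, B, by ring, Nat.mul_pos hp.pos hA, hB, fun q hq hd => ?_, h2⟩
      rcases (hq.dvd_mul).1 hd with h | h
      · rwa [(Nat.prime_dvd_prime_iff_eq hq hp).1 h]
      · exact h1 q hq h
    · refine ⟨A, p * B, by ring, hA, Nat.mul_pos hp.pos hB, h1, fun q hq hd => ?_⟩
      rcases (hq.dvd_mul).1 hd with h | h
      · rw [(Nat.prime_dvd_prime_iff_eq hq hp).1 h]; omega
      · exact h2 q hq h

/-- If a short integer combination of `N`-th roots of unity equals a combination of two arbitrary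
roots of unity, with coefficients `e 0` and `e 1`, then after collecting equal terms its total
multiplicity is at most `|e 0| + |e 1|`. Here short means that the number of terms, including the
two on the right, is below every prime factor of `N`. -/
theorem sum_abs_fiber_le {ι : Type*} (s : Finset ι) (d : ι → ℤ) (z : ι → ℂ) {N m : ℕ}
    (hN : 0 < N) (hm : 0 < m) (hz : ∀ i ∈ s, z i ^ N = 1)
    (hp : ∀ p, p.Prime → p ∣ N → s.card + 2 < p) (e : Fin 2 → ℤ) (u : Fin 2 → ℂ)
    (hu : ∀ j, u j ^ m = 1) (h : ∑ i ∈ s, (d i : ℂ) * z i = ∑ j, (e j : ℂ) * u j) :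
    ∑ w ∈ s.image z, |∑ i ∈ s with z i = w, d i| ≤ ∑ j, |e j| := by
  obtain ⟨A, B, rfl, hA, hB, hAp, hBp⟩ := exists_smooth_mul_rough (s.card + 2) m hm
  have hcop : N.Coprime A := Nat.coprime_of_dvd fun p hpp h1 h2 => by
    have := hp p hpp h1
    have := hAp p hpp h2
    omega
  have hroot : ∀ w ∈ s.image z, w ≠ 0 ∧ w ^ N = 1 := by
    intro w hw
    obtain ⟨i, hi, rfl⟩ := mem_image.1 hw
    exact ⟨fun h0 => by simpa [h0, hN.ne'] using hz i hi, hz i hi⟩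
  -- roots of unity of order dividing `N` are separated by the `A`-th power map
  have hsep : ∀ w w' : ℂ, w ^ N = 1 → w' ^ N = 1 → w' ≠ 0 → (w / w') ^ A = 1 → w = w' := by
    intro w w' h1 h2 h3 h4
    have h5 : (w / w') ^ N = 1 := by rw [div_pow, h1, h2, div_one]
    have h6 := pow_gcd_eq_one.2 ⟨h5, h4⟩
    rw [hcop.gcd_eq_one, pow_one] at h6
    exact (div_eq_one_iff_eq h3).1 h6
  have hbound : ∀ w ∈ s.image z, |∑ i ∈ s with z i = w, d i|
      ≤ ∑ j, if (u j / w) ^ A = 1 then |e j| else 0 := by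
    intro w hw
    obtain ⟨hw0, hwN⟩ := hroot w hw
    have hS := sum_coset (ι := ι ⊕ Fin 2) (Sum.elim d fun j => -e j)
      (fun k => Sum.elim z u k / w) hA (N * B) (Nat.mul_pos hN hB) (s.disjSum univ)
      (by
        intro p hpp hd
        rw [card_disjSum, card_univ, Fintype.card_fin]
        rcases hpp.dvd_mul.1 hd with h | h
        · exact hp p hpp h
        · exact hBp p hpp h)
      (by
        rintro (i | j) hk
        · have hi : i ∈ s := by simpa using hk
          rw [mul_left_comm, pow_mul, Sum.elim_inl, div_pow, hz i hi, hwN]; simp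
        · rw [Sum.elim_inr, div_pow, mul_left_comm, mul_comm, pow_mul, hu, mul_comm, pow_mul, hwN]
          simp)
      (by
        rw [sum_disjSum]
        simp only [Sum.elim_inl, Sum.elim_inr, Int.cast_neg, neg_mul, sum_neg_distrib,
          ← mul_div_assoc, ← sum_div, h]
        ring)
    rw [sum_filter, sum_disjSum] at hS
    simp only [Sum.elim_inl, Sum.elim_inr] at hS
    have h1 : ∑ i ∈ s, (if (z i / w) ^ A = 1 then (d i : ℂ) * (z i / w) else 0)
        = ((∑ i ∈ s with z i = w, d i : ℤ) : ℂ) := by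
      rw [sum_filter, Int.cast_sum]
      refine sum_congr rfl fun i hi => ?_
      by_cases hiw : z i = w
      · simp [hiw, hw0]
      · rw [if_neg hiw, if_neg fun h => hiw (hsep _ _ (hz i hi) hwN hw0 h), Int.cast_zero]
    replace hS : ((∑ i ∈ s with z i = w, d i : ℤ) : ℂ)
        + ∑ j, (if (u j / w) ^ A = 1 then ((-e j : ℤ) : ℂ) * (u j / w) else 0) = 0 := by
      rw [← h1]; exact hS
    rw [add_eq_zero_iff_eq_neg] at hS
    have h2 : ‖((∑ i ∈ s with z i = w, d i : ℤ) : ℂ)‖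
        ≤ ((∑ j, if (u j / w) ^ A = 1 then |e j| else 0 : ℤ) : ℝ) := by
      rw [hS, norm_neg, Int.cast_sum]
      refine (norm_sum_le _ _).trans (sum_le_sum fun j _ => ?_)
      split_ifs with hj
      · have : ‖u j / w‖ = 1 := Complex.norm_eq_one_of_pow_eq_one hj hA.ne'
        rw [norm_mul, this]
        simp
      · simp
    rw [Complex.norm_intCast] at h2
    exact_mod_cast h2
  refine (sum_le_sum hbound).trans ?_
  rw [sum_comm]
  refine sum_le_sum fun j _ => ?_
  by_cases hex : ∃ w ∈ s.image z, (u j / w) ^ A = 1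
  · obtain ⟨w, hw, hwj⟩ := hex
    rw [sum_eq_single_of_mem w hw, if_pos hwj]
    intro w' hw' hne
    refine if_neg fun hwj' => hne ?_
    obtain ⟨hw0, hwN⟩ := hroot w hw
    obtain ⟨hw0', hwN'⟩ := hroot w' hw'
    refine hsep w' w hwN' hwN hw0 ?_
    have hu0 : u j ≠ 0 := fun h0 => by simp [h0, hA.ne'] at hwj
    rw [show w' / w = (u j / w) / (u j / w') by field_simp, div_pow, hwj, hwj', div_one]
  · push Not at hex
    rw [sum_eq_zero fun w hw => if_neg (hex w hw)]
    exact abs_nonneg _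

/-! ### Characters of finite abelian groups and the variance bound -/

/-- The finite set of irreducible characters of a finite abelian group. -/
noncomputable instance dualFintype (G : Type*) [CommGroup G] [Fintype G] : Fintype (G →* ℂˣ) :=
  Fintype.ofFinite _

theorem card_dual (G : Type*) [CommGroup G] [Fintype G] :
    Fintype.card (G →* ℂˣ) = Fintype.card G := by
  rw [← Nat.card_eq_fintype_card, ← Nat.card_eq_fintype_card]
  exact CommGroup.card_monoidHom_of_hasEnoughRootsOfUnity G ℂ

theorem sum_dual_eq_zero {G : Type*} [CommGroup G] [Fintype G] {x : G} (hx : x ≠ 1) :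
    ∑ lam : G →* ℂˣ, (lam x : ℂ) = 0 := by
  obtain ⟨μ, hμ⟩ := CommGroup.exists_apply_ne_one_of_hasEnoughRootsOfUnity G ℂ hx
  have h : (μ x : ℂ) * ∑ lam : G →* ℂˣ, (lam x : ℂ) = ∑ lam : G →* ℂˣ, (lam x : ℂ) := by
    rw [mul_sum]
    exact Fintype.sum_equiv (Equiv.mulLeft μ) _ _ fun lam => by simp
  have h' : ((μ x : ℂ) - 1) * ∑ lam : G →* ℂˣ, (lam x : ℂ) = 0 := by
    rw [sub_mul, h, one_mul, sub_self]
  refine (mul_eq_zero.1 h').resolve_left fun h0 => hμ ?_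
  exact Units.ext (sub_eq_zero.1 h0)

theorem char_pow_card {G : Type*} [CommGroup G] [Fintype G] (lam : G →* ℂˣ) (x : G) :
    (lam x : ℂ) ^ Fintype.card G = 1 := by
  rw [← Units.val_pow_eq_pow_val, ← map_pow, pow_card_eq_one, map_one, Units.val_one]

theorem parseval {G : Type*} [CommGroup G] [Fintype G] (c : (G →* ℂˣ) → ℤ) :
    ∑ x : G, ‖∑ lam, (c lam : ℂ) * (lam x : ℂ)‖ ^ 2 = Fintype.card G * ∑ lam, (c lam : ℝ) ^ 2 := by
  classical
  have horth : ∀ lam μ : G →* ℂˣ, ∑ x, (lam x : ℂ) * starRingEnd ℂ (μ x : ℂ)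
      = if lam = μ then (Fintype.card G : ℂ) else 0 := by
    intro lam μ
    have h := sum_hom_units ((Units.coeHom ℂ).comp (lam / μ))
    have hiff : (Units.coeHom ℂ).comp (lam / μ) = 1 ↔ lam = μ := by
      rw [← div_eq_one (a := lam)]
      constructor
      · intro h1
        ext x
        exact congrArg (· x) h1
      · intro h1
        rw [h1]; ext x; simp
    simp only [hiff] at h
    rw [show (if lam = μ then (Fintype.card G : ℂ) else 0)
      = ((if lam = μ then Fintype.card G else 0 : ℕ) : ℂ) by push_cast; rfl, ← h]
    refine sum_congr rfl fun x _ => ?_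
    have hn : ‖(μ x : ℂ)‖ = 1 :=
      Complex.norm_eq_one_of_pow_eq_one (char_pow_card μ x) Fintype.card_ne_zero
    rw [← Complex.inv_eq_conj hn]
    simp [div_eq_mul_inv]
  have hC : ((∑ x : G, ‖∑ lam, (c lam : ℂ) * (lam x : ℂ)‖ ^ 2 : ℝ) : ℂ)
      = ((Fintype.card G * ∑ lam, (c lam : ℝ) ^ 2 : ℝ) : ℂ) := by
    push_cast
    simp_rw [← Complex.mul_conj', map_sum, map_mul, map_intCast, sum_mul_sum]
    rw [sum_comm, mul_sum]
    refine sum_congr rfl fun lam _ => ?_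
    rw [sum_comm]
    have : ∀ μ : G →* ℂˣ, ∑ x, (c lam : ℂ) * (lam x : ℂ) * ((c μ : ℂ) * starRingEnd ℂ (μ x : ℂ))
        = c lam * c μ * if lam = μ then (Fintype.card G : ℂ) else 0 := by
      intro μ
      rw [← horth, mul_sum]
      exact sum_congr rfl fun x _ => by ring
    simp_rw [this]
    simp
    ring
  exact_mod_cast hC

/-- Parseval's identity with the term of the identity element split off. -/
theorem variance_le {G : Type*} [CommGroup G] [Fintype G] (c : (G →* ℂˣ) → ℤ)
    (h : ∀ x : G, x ≠ 1 → ‖∑ lam, (c lam : ℂ) * (lam x : ℂ)‖ ≤ 2) :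
    (Fintype.card G : ℤ) * ∑ lam, c lam ^ 2 - (∑ lam, c lam) ^ 2 ≤ 4 * (Fintype.card G - 1) := by
  classical
  have hP := parseval c
  rw [← add_sum_erase _ _ (mem_univ (1 : G))] at hP
  have h1 : ‖∑ lam : G →* ℂˣ, (c lam : ℂ) * (lam 1 : ℂ)‖ ^ 2 = ((∑ lam, c lam : ℤ) : ℝ) ^ 2 := by
    simp only [map_one, Units.val_one, mul_one]
    rw [← Int.cast_sum, Complex.norm_intCast, sq_abs]
  have h2 : ∑ x ∈ univ.erase (1 : G), ‖∑ lam, (c lam : ℂ) * (lam x : ℂ)‖ ^ 2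
      ≤ ∑ x ∈ univ.erase (1 : G), (4 : ℝ) := by
    refine sum_le_sum fun x hx => ?_
    have := h x (ne_of_mem_erase hx)
    nlinarith [norm_nonneg (∑ lam, (c lam : ℂ) * (lam x : ℂ))]
  rw [sum_const, card_erase_of_mem (mem_univ _), card_univ, nsmul_eq_mul,
    Nat.cast_sub Fintype.card_pos] at h2
  rw [h1] at hP
  have : ((Fintype.card G : ℤ) * ∑ lam, c lam ^ 2 - (∑ lam, c lam) ^ 2 : ℝ)
      ≤ 4 * (Fintype.card G - 1) := by
    push_cast at *
    linarith
  exact_mod_cast this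

theorem abs_le_sq (n : ℤ) : |n| ≤ n ^ 2 := by
  rcases eq_or_ne n 0 with rfl | h
  · simp
  · rw [← sq_abs]; nlinarith [Int.one_le_abs h]

theorem sum_sum_sub_sq {ι : Type*} [Fintype ι] (c : ι → ℤ) :
    ∑ i, ∑ j, (c j - c i) ^ 2 = 2 * (Fintype.card ι * ∑ i, c i ^ 2 - (∑ i, c i) ^ 2) := by
  have : ∀ i j, (c j - c i) ^ 2 = c j ^ 2 + c i ^ 2 - 2 * (c i * c j) := fun i j => by ring
  simp_rw [this, sum_sub_distrib, sum_add_distrib, ← mul_sum, ← sum_mul]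
  simp
  rw [← mul_sum]
  ring

theorem exists_sum_sq_le {ι : Type*} [Fintype ι] [Nonempty ι] (c : ι → ℤ)
    (h : (Fintype.card ι : ℤ) * ∑ i, c i ^ 2 - (∑ i, c i) ^ 2 ≤ 4 * (Fintype.card ι - 1)) :
    ∃ a : ℤ, ∑ i, (c i - a) ^ 2 ≤ 7 := by
  have h1 : ∑ i, ∑ j, (c j - c i) ^ 2 < ∑ _i : ι, (8 : ℤ) := by
    rw [sum_sum_sub_sq]
    simp only [sum_const, card_univ, nsmul_eq_mul]
    linarith
  obtain ⟨i, -, hi⟩ := exists_lt_of_sum_lt h1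
  exact ⟨c i, by omega⟩

/-- For seven coefficients the variance bound forces three of them to coincide: otherwise every
value is taken at most twice, so each row of `(c j - c i) ^ 2` sums to at least
`2 * 0 + 4 * 1 + 4 = 8`. -/
theorem exists_card_ne_le {ι : Type*} [Fintype ι] (c : ι → ℤ) (h7 : Fintype.card ι = 7)
    (h : (Fintype.card ι : ℤ) * ∑ i, c i ^ 2 - (∑ i, c i) ^ 2 ≤ 4 * (Fintype.card ι - 1)) :
    ∃ a : ℤ, #{i | c i ≠ a} ≤ 4 := by
  by_contra! hcon
  have hfib : ∀ a : ℤ, (#{i | c i = a} : ℤ) ≤ 2 := by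
    intro a
    have h1 := hcon a
    simp only [ne_eq] at h1
    have h2 := card_filter_add_card_filter_not (s := (univ : Finset ι)) (fun i => c i = a)
    rw [card_univ, h7] at h2
    omega
  have hrow : ∀ i, 8 ≤ ∑ j, (c j - c i) ^ 2 := by
    intro i
    have hpt : ∀ j, 4 - 4 * (if c j = c i then 1 else 0) - 3 * (if c j = c i + 1 then 1 else 0)
        - 3 * (if c j = c i - 1 then 1 else 0) ≤ (c j - c i) ^ 2 := by
      intro j
      split_ifs <;> try nlinarith
      have : 2 ≤ c j - c i ∨ c j - c i ≤ -2 := by omega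
      rcases this with h | h <;> nlinarith
    have hsum := sum_le_sum fun j (_ : j ∈ univ) => hpt j
    simp only [sum_sub_distrib, ← mul_sum, sum_boole, sum_const, card_univ, h7, nsmul_eq_mul]
      at hsum
    push_cast at hsum
    linarith [hfib (c i), hfib (c i + 1), hfib (c i - 1)]
  have := sum_le_sum fun i (_ : i ∈ univ) => hrow i
  rw [sum_sum_sub_sq] at this
  simp only [sum_const, card_univ, h7, nsmul_eq_mul] at this
  rw [h7] at h
  push_cast at *
  linarith

/-- Splits off one signed unit from an integer vector, lowering the bound on its `ℓ¹` norm
by one; the unit is zero if the vector is. -/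
theorem exists_signed_unit {ι : Type*} [Fintype ι] [DecidableEq ι] [Nonempty ι] (d : ι → ℤ) (n : ℤ)
    (hn : 0 ≤ n)
    (h : ∑ i, |d i| ≤ n + 1) : ∃ (δ : ℤ) (i₀ : ι) (d' : ι → ℤ), δ ∈ ({-1, 0, 1} : Set ℤ) ∧
      (∀ i, d i = d' i + if i = i₀ then δ else 0) ∧ ∑ i, |d' i| ≤ n := by
  by_cases h0 : ∃ i, d i ≠ 0
  · obtain ⟨i₀, hi⟩ := h0
    refine ⟨(d i₀).sign, i₀, fun i => d i - if i = i₀ then (d i₀).sign else 0, ?_, by simp, ?_⟩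
    · rcases lt_trichotomy (d i₀) 0 with h | h | h
      · simp [Int.sign_eq_neg_one_of_neg h]
      · exact absurd h hi
      · simp [Int.sign_eq_one_of_pos h]
    · have : ∀ i, |d i - if i = i₀ then (d i₀).sign else 0| = |d i| - if i = i₀ then 1 else 0 := by
        intro i
        split_ifs with h
        · subst h
          rcases lt_trichotomy (d i) 0 with h | h | h
          · rw [Int.sign_eq_neg_one_of_neg h, abs_of_neg h, abs_of_nonpos (by omega)]; omega
          · exact absurd h hi
          · rw [Int.sign_eq_one_of_pos h, abs_of_pos h, abs_of_nonneg (by omega)]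
        · simp
      simp_rw [this, sum_sub_distrib]
      simp
      linarith
  · push Not at h0
    exact ⟨0, Classical.arbitrary ι, fun _ => 0, by simp, by simp [h0], by simpa using hn⟩

/-- Two distinct characters agree on a proper subgroup, whose index is a divisor of `|G|` greater
than one, hence at least `7`. -/
theorem proper_ker_card {G : Type*} [CommGroup G] [Fintype G] [DecidableEq G]
    (h2 : ¬ (2 ∣ Fintype.card G)) (h3 : ¬ (3 ∣ Fintype.card G)) (h5 : ¬ (5 ∣ Fintype.card G))
    {lam μ : G →* ℂˣ} (hne : lam ≠ μ) : 7 * #{x | lam x = μ x} ≤ Fintype.card G := by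
  have hset : #{x | lam x = μ x} = Nat.card (lam / μ).ker := by
    rw [← Fintype.card_subtype, ← Nat.card_eq_fintype_card]
    refine Nat.card_congr (Equiv.subtypeEquivRight fun x => ?_)
    rw [MonoidHom.mem_ker, MonoidHom.div_apply, div_eq_one]
  have hmul := (lam / μ).ker.card_mul_index
  rw [Nat.card_eq_fintype_card (α := G)] at hmul
  have hdvd : (lam / μ).ker.index ∣ Fintype.card G := ⟨_, by rw [← hmul, mul_comm]⟩
  have h1 : (lam / μ).ker.index ≠ 1 := by
    rw [Ne, Subgroup.index_eq_one]
    intro htop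
    refine hne (div_eq_one.1 ?_)
    ext x
    have : x ∈ (lam / μ).ker := htop ▸ Subgroup.mem_top x
    rw [MonoidHom.mem_ker.1 this]; simp
  have h7 : 7 ≤ (lam / μ).ker.index := by
    by_contra hlt
    push Not at hlt
    generalize (lam / μ).ker.index = k at *
    interval_cases k
    · have := Fintype.card_pos (α := G)
      rw [zero_dvd_iff] at hdvd; omega
    all_goals omega
  rw [hset, ← hmul, mul_comm]
  exact Nat.mul_le_mul_left _ h7

/-! ### Bounding the number of constituents -/

/-- A uniform shape for the three cases of the definition: two roots of unity of a common exponent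
`m`, with integer multiplicities of total size at most two, possibly zero. -/
theorem IsSumAtMostTwoRootsOfUnity.exists_eq_sum {z : ℂ} (hz : IsSumAtMostTwoRootsOfUnity z) :
    ∃ (m : ℕ) (e : Fin 2 → ℤ) (u : Fin 2 → ℂ), 0 < m ∧ (∀ j, u j ^ m = 1) ∧
      ∑ j, |e j| ≤ 2 ∧ z = ∑ j, (e j : ℂ) * u j := by
  rcases hz with rfl | ⟨m, hm, h⟩ | ⟨u, v, ⟨m, hm, hu⟩, ⟨n, hn, hv⟩, rfl⟩
  · exact ⟨1, 0, 1, one_pos, by simp, by simp, by simp⟩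
  · refine ⟨m, ![1, 0], ![z, 1], hm, fun j => ?_, by simp, by simp⟩
    fin_cases j <;> simp [h]
  · refine ⟨m * n, ![1, 1], ![u, v], Nat.mul_pos hm hn, fun j => ?_, by simp, by simp⟩
    fin_cases j
    · simp [pow_mul, hu]
    · simp [mul_comm m, pow_mul, hv]

theorem IsSumAtMostTwoRootsOfUnity.norm_le {z : ℂ} (hz : IsSumAtMostTwoRootsOfUnity z) :
    ‖z‖ ≤ 2 := by
  obtain ⟨m, e, u, hm, hu, he, rfl⟩ := hz.exists_eq_sum
  refine (norm_sum_le _ _).trans ?_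
  have : ∀ j, ‖(e j : ℂ) * u j‖ = ((|e j| : ℤ) : ℝ) := by
    intro j
    rw [norm_mul, Complex.norm_eq_one_of_pow_eq_one (hu j) hm.ne']
    simp
  simp_rw [this]
  exact_mod_cast he

theorem sum_abs_fiber_char_le {G : Type*} [CommGroup G] [Fintype G] (d : (G →* ℂˣ) → ℤ)
    (s : Finset (G →* ℂˣ)) (hs : ∀ lam, lam ∉ s → d lam = 0)
    (hp : ∀ p, p.Prime → p ∣ Fintype.card G → s.card + 2 < p) (x : G)
    (hx : IsSumAtMostTwoRootsOfUnity (∑ lam, (d lam : ℂ) * (lam x : ℂ))) :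
    ∑ w ∈ s.image (fun lam => (lam x : ℂ)), |∑ lam ∈ s with (lam x : ℂ) = w, d lam| ≤ 2 := by
  obtain ⟨m, e, u, hm, hu, he, hsum⟩ := hx.exists_eq_sum
  refine (sum_abs_fiber_le s d (fun lam => (lam x : ℂ)) Fintype.card_pos hm
    (fun lam _ => char_pow_card lam x) hp e u hu ?_).trans he
  rw [← hsum]
  refine sum_subset (subset_univ s) fun lam _ h => ?_
  rw [hs lam h]; simp

theorem sum_abs_le_of_prime {G : Type*} [CommGroup G] [Fintype G] (hG : (Fintype.card G).Prime)
    (d : (G →* ℂˣ) → ℤ) (s : Finset (G →* ℂˣ)) (hs : ∀ lam, lam ∉ s → d lam = 0)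
    (hcard : s.card + 2 < Fintype.card G)
    (hval : ∀ x : G, x ≠ 1 → IsSumAtMostTwoRootsOfUnity (∑ lam, (d lam : ℂ) * (lam x : ℂ))) :
    ∑ lam, |d lam| ≤ 2 := by
  have hnt : Nontrivial G := Fintype.one_lt_card_iff_nontrivial.1 hG.one_lt
  obtain ⟨x, hx⟩ := exists_ne (1 : G)
  have hinj : Function.Injective fun lam : G →* ℂˣ => (lam x : ℂ) := by
    intro lam μ h
    have h' : lam x = μ x := Units.ext h
    have : Fact (Fintype.card G).Prime := ⟨hG⟩
    ext y
    obtain ⟨k, rfl⟩ := Subgroup.mem_zpowers_iff.1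
      (mem_zpowers_of_prime_card (p := Fintype.card G) (g' := y) Nat.card_eq_fintype_card hx)
    rw [map_zpow, map_zpow, h']
  have h := sum_abs_fiber_char_le d s hs (fun p hp hd => by
    rwa [(Nat.prime_dvd_prime_iff_eq hp hG).1 hd]) x (hval x hx)
  rw [sum_image fun a _ b _ hab => hinj hab] at h
  have hfib : ∀ lam ∈ s, ∑ μ ∈ s with (μ x : ℂ) = (lam x : ℂ), d μ = d lam := by
    intro lam hlam
    have : (s.filter fun μ => (μ x : ℂ) = (lam x : ℂ)) = {lam} := by
      ext μ
      simp only [mem_filter, mem_singleton]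
      exact ⟨fun h => hinj h.2, by rintro rfl; exact ⟨hlam, rfl⟩⟩
    rw [this, sum_singleton]
  rw [sum_congr rfl fun lam hlam => by rw [hfib lam hlam]] at h
  rwa [← sum_subset (subset_univ s) fun lam _ h => by rw [hs lam h, abs_zero]]

theorem sum_abs_le_of_sum_sq_le {G : Type*} [CommGroup G] [Fintype G] [DecidableEq G]
    (h2 : ¬ (2 ∣ Fintype.card G)) (h3 : ¬ (3 ∣ Fintype.card G)) (h5 : ¬ (5 ∣ Fintype.card G))
    (h1 : 1 < Fintype.card G)
    (d : (G →* ℂˣ) → ℤ) (hQ : ∑ lam, d lam ^ 2 ≤ 4)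
    (hval : ∀ x : G, x ≠ 1 → IsSumAtMostTwoRootsOfUnity (∑ lam, (d lam : ℂ) * (lam x : ℂ))) :
    ∑ lam, |d lam| ≤ 2 := by
  classical
  by_contra! hcon
  have hone : ∀ lam, |d lam| ≤ 1 := by
    intro lam
    by_contra! hlt
    -- a coefficient of absolute value at least two already exhausts the sum of squares
    have ha := add_sum_erase univ (fun μ => d μ ^ 2) (mem_univ lam)
    have hb := add_sum_erase univ (fun μ => |d μ|) (mem_univ lam)
    have hc := sum_le_sum fun μ (_ : μ ∈ univ.erase lam) => abs_le_sq (d μ)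
    have hd : 0 ≤ ∑ μ ∈ univ.erase lam, |d μ| := sum_nonneg fun _ _ => abs_nonneg _
    have he : |d lam| ^ 2 = d lam ^ 2 := sq_abs _
    nlinarith
  set P : Finset (G →* ℂˣ) := {lam | d lam = 1} with hPdef
  set Q : Finset (G →* ℂˣ) := {lam | d lam = -1} with hQdef
  set s : Finset (G →* ℂˣ) := {lam | d lam ≠ 0} with hsdef
  have htri : ∀ lam, d lam = 0 ∨ d lam = 1 ∨ d lam = -1 := fun lam => by
    have := abs_le.1 (hone lam); omega
  have hs : s = P ∪ Q := by
    ext lam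
    simp only [hsdef, hPdef, hQdef, mem_filter, mem_univ, true_and, mem_union]
    have := htri lam
    omega
  have hdisj : Disjoint P Q := by
    rw [disjoint_filter]; intro lam _ h; omega
  have hcardPQ : s.card = P.card + Q.card := by rw [hs, card_union_of_disjoint hdisj]
  have hs4 : s.card ≤ 4 := by
    have : (s.card : ℤ) = ∑ lam, d lam ^ 2 := by
      rw [hsdef, card_filter]
      push_cast
      refine sum_congr rfl fun lam _ => ?_
      rcases htri lam with h | h | h <;> simp [h]
    omega
  have hs3 : 2 < s.card := by
    have : (s.card : ℤ) = ∑ lam, |d lam| := by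
      rw [hsdef, card_filter]
      push_cast
      refine sum_congr rfl fun lam _ => ?_
      rcases htri lam with h | h | h <;> simp [h]
    omega
  have hprime : ∀ p, p.Prime → p ∣ Fintype.card G → s.card + 2 < p := by
    intro p hp hd
    by_contra! hlt
    have : p ≤ 6 := by omega
    have := hp.two_le
    interval_cases p
    · exact h2 hd
    · exact h3 hd
    · exact absurd hp (by norm_num)
    · exact h5 hd
    · exact absurd hp (by norm_num)
  -- at each `x ≠ 1` a positive and a negative constituent cancel
  have hcancel : ∀ x : G, x ≠ 1 → ∃ lam ∈ P, ∃ μ ∈ Q, lam x = μ x := by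
    intro x hx
    by_contra! hno
    have hle := sum_abs_fiber_char_le d s (fun lam h => by simpa [hsdef] using h) hprime x
      (hval x hx)
    have hfib : ∀ w ∈ s.image (fun lam => (lam x : ℂ)),
        |∑ lam ∈ s with (lam x : ℂ) = w, d lam| = #{lam ∈ s | (lam x : ℂ) = w} := by
      intro w hw
      obtain ⟨lam, hlam, rfl⟩ := mem_image.1 hw
      -- all constituents taking the same value at `x` as `lam` have the same sign as `lam`
      have hsame : ∀ μ ∈ s.filter (fun μ => (μ x : ℂ) = (lam x : ℂ)), d μ = d lam := by
        intro μ hμ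
        obtain ⟨hμs, hμx⟩ := mem_filter.1 hμ
        have hμx' : μ x = lam x := Units.ext hμx
        rw [hs, mem_union] at hμs hlam
        rcases hμs with hμs | hμs <;> rcases hlam with hlam | hlam
        · rw [(mem_filter.1 hμs).2, (mem_filter.1 hlam).2]
        · exact absurd hμx' (hno μ hμs lam hlam)
        · exact absurd hμx'.symm (hno lam hlam μ hμs)
        · rw [(mem_filter.1 hμs).2, (mem_filter.1 hlam).2]
      rw [sum_congr rfl hsame, sum_const, nsmul_eq_mul, abs_mul]
      have : |d lam| = 1 := by
        rcases htri lam with h | h | h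
        · exact absurd h (mem_filter.1 hlam).2
        · simp [h]
        · simp [h]
      rw [this, mul_one, Nat.abs_cast]
    rw [sum_congr rfl hfib, ← Nat.cast_sum, ← card_eq_sum_card_image] at hle
    omega
  have hnt : Nontrivial G := Fintype.one_lt_card_iff_nontrivial.1 h1
  have hcover : (univ : Finset G) ⊆ (P ×ˢ Q).biUnion fun q => {x | q.1 x = q.2 x} := by
    intro x _
    simp only [mem_biUnion, mem_product, mem_filter, mem_univ, true_and, Prod.exists]
    by_cases hx : x = 1
    · obtain ⟨y, hy⟩ := exists_ne (1 : G)
      obtain ⟨lam, hl, μ, hm, -⟩ := hcancel y hy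
      exact ⟨lam, μ, ⟨hl, hm⟩, by simp [hx]⟩
    · obtain ⟨lam, hl, μ, hm, h⟩ := hcancel x hx
      exact ⟨lam, μ, ⟨hl, hm⟩, h⟩
  have hcount := (card_le_card hcover).trans card_biUnion_le
  have hker : ∀ q ∈ P ×ˢ Q, 7 * #{x | q.1 x = q.2 x} ≤ Fintype.card G := by
    intro q hq
    obtain ⟨hq1, hq2⟩ := mem_product.1 hq
    exact proper_ker_card h2 h3 h5 fun h => disjoint_left.1 hdisj hq1 (h ▸ hq2)
  have hsum := sum_le_sum hker
  rw [← mul_sum, sum_const, card_product, smul_eq_mul] at hsum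
  rw [card_univ] at hcount
  have hPQ : P.card * Q.card ≤ 4 := by
    have : P.card ≤ 4 := by omega
    have : Q.card ≤ 4 - P.card := by omega
    interval_cases P.card <;> omega
  have := Nat.mul_le_mul_right (Fintype.card G) hPQ
  omega

theorem stmt_0 {G : Type*} [CommGroup G] [Fintype G] [DecidableEq G]
    (h2 : ¬ (2 ∣ Fintype.card G)) (h3 : ¬ (3 ∣ Fintype.card G)) (h5 : ¬ (5 ∣ Fintype.card G))
    (χ : G → ℂ)
    -- χ is a generalized character of G: a ℤ-linear combination of irreducible characters
    (hgen : ∃ c : (G →* ℂˣ) →₀ ℤ, ∀ g : G, χ g = c.sum fun lam n => (n : ℂ) * (lam g : ℂ))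
    -- values on nonidentity elements are sums of at most two roots of unity
    (hval : ∀ x : G, x ≠ 1 → IsSumAtMostTwoRootsOfUnity (χ x)) :
    ∃ (a δ₁ δ₂ : ℤ) (lam₁ lam₂ : G →* ℂˣ),
      δ₁ ∈ ({-1, 0, 1} : Set ℤ) ∧ δ₂ ∈ ({-1, 0, 1} : Set ℤ) ∧
      ∀ g : G, χ g = (a : ℂ) * (if g = 1 then (Fintype.card G : ℂ) else 0)
          + (δ₁ : ℂ) * (lam₁ g : ℂ) + (δ₂ : ℂ) * (lam₂ g : ℂ) := by
  classical
  obtain ⟨c, hc⟩ := hgen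
  have hχ : ∀ g, χ g = ∑ lam, (c lam : ℂ) * (lam g : ℂ) := fun g => by
    rw [hc, Finsupp.sum_fintype _ _ (by simp)]
  have hreg : ∀ g : G, ∑ lam : G →* ℂˣ, (lam g : ℂ) = if g = 1 then (Fintype.card G : ℂ) else 0 := by
    intro g
    split_ifs with h
    · simp [h, ← card_dual G]
    · exact sum_dual_eq_zero h
  have hsub : ∀ (a : ℤ) (g : G), ∑ lam, ((c lam - a : ℤ) : ℂ) * (lam g : ℂ)
      = χ g - a * if g = 1 then (Fintype.card G : ℂ) else 0 := by
    intro a g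
    rw [hχ, ← hreg, mul_sum, ← sum_sub_distrib]
    exact sum_congr rfl fun lam _ => by push_cast; ring
  have hvala : ∀ (a : ℤ) (x : G), x ≠ 1 →
      IsSumAtMostTwoRootsOfUnity (∑ lam, ((c lam - a : ℤ) : ℂ) * (lam x : ℂ)) := by
    intro a x hx
    rw [hsub, if_neg hx, mul_zero, sub_zero]
    exact hval x hx
  have hvar : ∀ a : ℤ, (Fintype.card G : ℤ) * ∑ lam, (c lam - a) ^ 2 - (∑ lam, (c lam - a)) ^ 2
      ≤ 4 * (Fintype.card G - 1) := fun a =>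
    variance_le (fun lam => c lam - a) fun x hx => (hvala a x hx).norm_le
  have hvar0 : (Fintype.card (G →* ℂˣ) : ℤ) * ∑ lam, c lam ^ 2 - (∑ lam, c lam) ^ 2
      ≤ 4 * (Fintype.card (G →* ℂˣ) - 1) := by
    simpa [card_dual G] using hvar 0
  suffices hmain : ∃ a : ℤ, ∑ lam, |c lam - a| ≤ 2 by
    obtain ⟨a, ha⟩ := hmain
    obtain ⟨δ₁, lam₁, d₁, hδ₁, hd₁, h₁⟩ := exists_signed_unit (fun lam => c lam - a) 1
      (by norm_num) ha
    obtain ⟨δ₂, lam₂, d₂, hδ₂, hd₂, h₂⟩ := exists_signed_unit d₁ 0 le_rfl (by simpa using h₁)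
    have hd₂0 : ∀ lam, d₂ lam = 0 := fun lam => by
      have := single_le_sum (fun μ (_ : μ ∈ univ) => abs_nonneg (d₂ μ)) (mem_univ lam)
      exact abs_nonpos_iff.1 (this.trans h₂)
    refine ⟨a, δ₁, δ₂, lam₁, lam₂, hδ₁, hδ₂, fun g => ?_⟩
    have h := hsub a g
    have hd : ∀ lam, c lam - a = (if lam = lam₂ then δ₂ else 0) + if lam = lam₁ then δ₁ else 0 := by
      intro lam
      rw [hd₁ lam, hd₂ lam, hd₂0 lam, zero_add]
    simp_rw [hd] at h
    push_cast at h
    simp only [add_mul, sum_add_distrib, ite_mul, zero_mul, sum_ite_eq', mem_univ, if_true] at h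
    linear_combination -h
  by_cases hN : Fintype.card G < 23
  · by_cases hN1 : Fintype.card G = 1
    · have : Subsingleton (G →* ℂˣ) :=
        Fintype.card_le_one_iff_subsingleton.1 (by rw [card_dual, hN1])
      refine ⟨c 1, ?_⟩
      rw [sum_eq_zero fun lam _ => by rw [Subsingleton.elim lam 1, sub_self, abs_zero]]
      norm_num
    have hpos := Fintype.card_pos (α := G)
    have hprime : (Fintype.card G).Prime ∧ (Fintype.card G = 7 ∨ 11 ≤ Fintype.card G) := by
      generalize Fintype.card G = n at *
      clear hsub hvar hreg
      interval_cases n <;> first | omega | norm_num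
    obtain ⟨a, ha⟩ : ∃ a : ℤ, #{lam | c lam - a ≠ 0} + 2 < Fintype.card G := by
      rcases hprime.2 with h7 | h11
      · obtain ⟨a, ha⟩ := exists_card_ne_le (⇑c) (by rw [card_dual, h7]) hvar0
        refine ⟨a, ?_⟩
        simp only [ne_eq, sub_eq_zero] at ha ⊢
        omega
      · obtain ⟨a, ha⟩ := exists_sum_sq_le (⇑c) hvar0
        refine ⟨a, ?_⟩
        have : (#{lam | c lam - a ≠ 0} : ℤ) ≤ ∑ lam, (c lam - a) ^ 2 := by
          rw [card_filter]
          push_cast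
          refine sum_le_sum fun lam _ => ?_
          split_ifs with h
          · have := sq_pos_of_ne_zero h
            omega
          · exact sq_nonneg _
        omega
    exact ⟨a, sum_abs_le_of_prime hprime.1 _ _ (fun lam h => by simpa using h) ha (hvala a)⟩
  · push Not at hN
    obtain ⟨a, ha⟩ := exists_sum_sq_le (⇑c) hvar0
    refine ⟨a, sum_abs_le_of_sum_sq_le h2 h3 h5 (by omega) _ ?_ (hvala a)⟩
    have hv := hvar a
    have hle : |∑ lam, (c lam - a)| ≤ ∑ lam, (c lam - a) ^ 2 := by
      exact (abs_sum_le_sum_abs _ _).trans (sum_le_sum fun lam _ => abs_le_sq _)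
    have hsq := sq_le_sq.2 (hle.trans (le_abs_self _))
    have hN' : (23 : ℤ) ≤ Fintype.card G := by exact_mod_cast hN
    by_contra! hlt
    generalize ∑ lam, (c lam - a) ^ 2 = q at *
    have : q ≤ 7 := ha
    -- `hv` and `hsq` give `N * q - q ^ 2 ≤ 4 * N - 4`, which fails for `q = 5, 6, 7` and `N ≥ 23`
    interval_cases q <;> linarith
end

section
/- Let G be a finite group. The prime graph Γ(G) is disconnected if and only if there exists a generalized character χ of G such that χ(x) is either 0 or a root of unity for every nonidentity x ∈ G, and there exist nonidentity elements x, y ∈ G with χ(x) = 0 and χ(y) a root of unity (i.e., χ is neither an integer multiple of the regular character nor root-of-unity valued on all nonidentity elements). -/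
/-- A generalized character of a finite group: the difference of the characters of two
finite-dimensional complex representations. -/
def IsGenChar (G : Type) [Group G] (χ : G → ℂ) : Prop :=
  ∃ V W : FDRep ℂ G, ∀ g : G, χ g = V.character g - W.character g

/-! ### Congruences for generalized characters -/

/-- Powers of an endomorphism of finite order have traces given by power sums of roots of unity. -/
lemma trace_pow_eq_sum {V : Type} [AddCommGroup V] [Module ℂ V] [FiniteDimensional ℂ V]
    (f : Module.End ℂ V) {n : ℕ} (hn : 0 < n) (hf : f ^ n = 1) :
    ∃ (s : Finset ℂ) (d : ℂ → ℕ), (∀ μ ∈ s, μ ^ n = 1) ∧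
      ∀ k : ℕ, LinearMap.trace ℂ V (f ^ k) = ∑ μ ∈ s, (d μ : ℂ) * μ ^ k := by
  have hss : f.IsSemisimple := by
    refine Module.End.isSemisimple_of_squarefree_aeval_eq_zero
      (p := (Polynomial.X ^ n - 1 : Polynomial ℂ)) ?_ (by simp [hf])
    exact (Polynomial.separable_X_pow_sub_C (1 : ℂ) (by exact_mod_cast hn.ne')
      one_ne_zero).squarefree
  have hinteg := DirectSum.isInternal_submodule_of_iSupIndep_of_iSup_eq_top
    f.eigenspaces_iSupIndep hss.iSup_eigenspace_eq_top
  have hfin : {μ | f.eigenspace μ ≠ ⊥}.Finite :=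
    WellFoundedGT.finite_ne_bot_of_iSupIndep f.eigenspaces_iSupIndep
  have hpow : ∀ (k : ℕ) (μ : ℂ) (v : V), v ∈ f.eigenspace μ → (f ^ k) v = μ ^ k • v := by
    intro k μ v hv
    rw [Module.End.mem_eigenspace_iff] at hv
    induction k with
    | zero => simp
    | succ k ih => rw [pow_succ, Module.End.mul_apply, hv, map_smul, ih, smul_smul, pow_succ']
  refine ⟨hfin.toFinset, fun μ => Module.finrank ℂ (f.eigenspace μ), ?_, ?_⟩
  · intro μ hμ
    obtain ⟨v, hv, hv0⟩ := (Submodule.ne_bot_iff _).1 (hfin.mem_toFinset.1 hμ)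
    have h1 := hpow n μ v hv
    rw [hf, Module.End.one_apply] at h1
    exact smul_left_injective ℂ hv0 (by simpa using h1.symm)
  · intro k
    have hmaps : ∀ μ, Set.MapsTo (f ^ k) (f.eigenspace μ) (f.eigenspace μ) := by
      intro μ v hv
      rw [SetLike.mem_coe, hpow k μ v hv]
      exact Submodule.smul_mem _ _ hv
    rw [LinearMap.trace_eq_sum_trace_restrict' hinteg hfin hmaps]
    refine Finset.sum_congr rfl fun μ _ => ?_
    have : (f ^ k).restrict (hmaps μ) = μ ^ k • LinearMap.id := by
      ext v
      exact hpow k μ v v.2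
    rw [this, map_smul, LinearMap.trace_id, smul_eq_mul, mul_comm]

/-- The ring of all algebraic integers in `ℂ`. -/
abbrev AlgInt : Type := integralClosure ℤ ℂ

/-- A root of unity divisible by `p` would make `1 / p` an algebraic integer. -/
lemma not_dvd_of_isRootOfUnity {p : ℕ} (hp : p.Prime) {a : AlgInt}
    (ha : IsRootOfUnity (a : ℂ)) : ¬ (p : AlgInt) ∣ a := by
  rintro ⟨c, rfl⟩
  obtain ⟨n, hn, h⟩ := ha
  have hpc : (p : ℂ) ≠ 0 := by exact_mod_cast hp.ne_zero
  have hinteg : IsIntegral ℤ (algebraMap ℚ ℂ (((p : ℚ)⁻¹) ^ n)) := by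
    have : algebraMap ℚ ℂ (((p : ℚ)⁻¹) ^ n) = (c : ℂ) ^ n := by
      have h' : (p : ℂ) ^ n * (c : ℂ) ^ n = 1 := by rw [← mul_pow]; simpa using h
      simp only [map_pow, map_inv₀, map_natCast, inv_pow]
      exact inv_eq_of_mul_eq_one_right h'
    rw [this]
    exact IsIntegral.pow c.2 n
  rw [isIntegral_algebraMap_iff (algebraMap ℚ ℂ).injective] at hinteg
  obtain ⟨m, hm⟩ := IsIntegrallyClosed.isIntegral_iff.1 hinteg
  have hm' : (p : ℤ) ^ n * m = 1 := by
    have : ((p : ℚ)) ^ n * (m : ℚ) = 1 := by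
      have hm2 : (m : ℚ) = ((p : ℚ)⁻¹) ^ n := by simpa using hm
      rw [hm2, ← mul_pow, mul_inv_cancel₀ (by exact_mod_cast hp.ne_zero), one_pow]
    exact_mod_cast this
  have h2 : (p : ℤ) ∣ 1 := (dvd_pow_self _ hn.ne').trans ⟨m, hm'.symm⟩
  exact hp.one_lt.ne' (by exact_mod_cast Int.eq_one_of_dvd_one (by positivity) h2)

lemma natCast_dvd_intCast_algInt {p : ℕ} (hp : p.Prime) {n : ℤ} :
    (p : AlgInt) ∣ (n : AlgInt) ↔ (p : ℤ) ∣ n := by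
  constructor
  · intro h
    by_contra hn
    have hcop : p.Coprime n.natAbs :=
      (Nat.Prime.coprime_iff_not_dvd hp).2 fun h' => hn (Int.natCast_dvd.2 h')
    obtain ⟨u, v, huv⟩ : IsCoprime (p : ℤ) n :=
      Int.isCoprime_iff_gcd_eq_one.2 (by simpa [Int.gcd] using hcop)
    refine not_dvd_of_isRootOfUnity hp (a := 1) ⟨1, one_pos, by simp⟩ ?_
    have : (1 : AlgInt) = (u : AlgInt) * p + v * n := by exact_mod_cast huv.symm
    rw [this]
    exact dvd_add (dvd_mul_left _ _) (h.mul_left _)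
  · rintro ⟨m, rfl⟩
    exact ⟨m, by push_cast; ring⟩

/-- A Frobenius-type congruence: if `χ` is a generalized character then
`χ(x) ^ p ≡ χ(x ^ p)` modulo `p` in the ring of algebraic integers. -/
lemma genChar_pow_congr {G : Type} [Group G] [Finite G] {χ : G → ℂ} (hχ : IsGenChar G χ)
    {p : ℕ} (hp : p.Prime) (x : G) :
    ∃ a b : AlgInt, (a : ℂ) = χ x ∧ (b : ℂ) = χ (x ^ p) ∧ (p : AlgInt) ∣ a ^ p - b := by
  have : Fact p.Prime := ⟨hp⟩
  have : CharP (AlgInt ⧸ Ideal.span {(p : AlgInt)}) p := by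
    refine CharP.quotient AlgInt p fun hu => ?_
    exact not_dvd_of_isRootOfUnity hp (a := 1) ⟨1, one_pos, by simp⟩ hu.dvd
  have key : ∀ V : FDRep ℂ G, ∃ a b : AlgInt, (a : ℂ) = V.character x ∧
      (b : ℂ) = V.character (x ^ p) ∧
      (Ideal.Quotient.mk (Ideal.span {(p : AlgInt)}) a) ^ p = Ideal.Quotient.mk _ b := by
    intro V
    have hpos : 0 < orderOf x := orderOf_pos x
    obtain ⟨s, d, hs, ht⟩ := trace_pow_eq_sum (V.ρ x) hpos
      (by rw [← map_pow, pow_orderOf_eq_one, map_one])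
    have hsint : ∀ μ ∈ s, IsIntegral ℤ μ := fun μ hμ =>
      IsIntegral.of_pow hpos (by rw [hs μ hμ]; exact isIntegral_one)
    refine ⟨∑ μ ∈ s.attach, (d μ : AlgInt) * ⟨μ, hsint μ μ.2⟩,
      ∑ μ ∈ s.attach, (d μ : AlgInt) * ⟨μ, hsint μ μ.2⟩ ^ p, ?_, ?_, ?_⟩
    · have := ht 1
      rw [pow_one] at this
      rw [FDRep.character, this, ← Finset.sum_attach s]
      simp
    · have := ht p
      rw [FDRep.character, map_pow, this, ← Finset.sum_attach s]
      simp
    · rw [map_sum, map_sum, sum_pow_char]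
      refine Finset.sum_congr rfl fun μ _ => ?_
      rw [map_mul, map_mul, mul_pow, map_pow, map_natCast]
      congr 1
      exact map_natCast (frobenius _ p) (d μ)
  obtain ⟨V, W, h⟩ := hχ
  obtain ⟨a, b, ha, hb, hab⟩ := key V
  obtain ⟨a', b', ha', hb', hab'⟩ := key W
  refine ⟨a - a', b - b', by simp [h, ha, ha'], by simp [h, hb, hb'], ?_⟩
  rw [← Ideal.mem_span_singleton, ← Ideal.Quotient.eq, map_pow, map_sub, map_sub,
    sub_pow_char, hab, hab']

lemma genChar_one {G : Type} [Group G] {χ : G → ℂ} (hχ : IsGenChar G χ) :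
    ∃ n : ℤ, χ 1 = n := by
  obtain ⟨V, W, h⟩ := hχ
  refine ⟨(Module.finrank ℂ V : ℤ) - Module.finrank ℂ W, ?_⟩
  rw [h, FDRep.char_one, FDRep.char_one]
  simp

/-- A value of `χ` off the identity is zero or a unit, so it vanishes as soon as `p` divides
something congruent to its `p`-th power. -/
lemma genChar_dvd_iff {G : Type} [Group G] {χ : G → ℂ}
    (hval : ∀ x : G, x ≠ 1 → χ x = 0 ∨ IsRootOfUnity (χ x))
    {p : ℕ} (hp : p.Prime) {x : G} (hx : x ≠ 1) {a b : AlgInt} (ha : (a : ℂ) = χ x)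
    (hab : (p : AlgInt) ∣ a ^ p - b) : χ x = 0 ↔ (p : AlgInt) ∣ b := by
  constructor
  · intro h0
    have : a = 0 := by ext; simp [ha, h0]
    simpa [this, hp.ne_zero] using hab
  · intro hb
    refine (hval x hx).resolve_right fun hr => ?_
    have h1 : (p : AlgInt) ∣ a ^ p := by simpa using dvd_add hab hb
    refine not_dvd_of_isRootOfUnity hp (a := a ^ p) ?_ h1
    obtain ⟨n, hn, h⟩ := hr
    exact ⟨n, hn, by rw [SubmonoidClass.coe_pow, ha, ← pow_mul, mul_comm, pow_mul, h, one_pow]⟩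

/-- Vanishing of `χ` is insensitive to taking `p`-th powers, as long as these are nontrivial. -/
lemma genChar_zero_iff_pow {G : Type} [Group G] [Finite G] {χ : G → ℂ} (hχ : IsGenChar G χ)
    (hval : ∀ x : G, x ≠ 1 → χ x = 0 ∨ IsRootOfUnity (χ x))
    {p : ℕ} (hp : p.Prime) {x : G} (hx : x ^ p ≠ 1) : χ x = 0 ↔ χ (x ^ p) = 0 := by
  obtain ⟨a, b, ha, hb, hab⟩ := genChar_pow_congr hχ hp x
  rw [genChar_dvd_iff hval hp (by rintro rfl; simp at hx) ha hab]
  constructor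
  · intro h
    refine (hval _ hx).resolve_right fun hr => ?_
    exact not_dvd_of_isRootOfUnity hp (by rwa [hb]) h
  · intro h
    have : b = 0 := by ext; simp [hb, h]
    simp [this]

lemma genChar_zero_iff_of_pow_eq_one {G : Type} [Group G] [Finite G] {χ : G → ℂ}
    (hχ : IsGenChar G χ) (hval : ∀ x : G, x ≠ 1 → χ x = 0 ∨ IsRootOfUnity (χ x))
    {n : ℤ} (hn : χ 1 = n) {p : ℕ} (hp : p.Prime) {x : G} (hx : x ≠ 1) (hxp : x ^ p = 1) :
    χ x = 0 ↔ (p : ℤ) ∣ n := by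
  obtain ⟨a, b, ha, hb, hab⟩ := genChar_pow_congr hχ hp x
  rw [genChar_dvd_iff hval hp hx ha hab, ← natCast_dvd_intCast_algInt hp]
  have : b = n := by ext; simp [hb, hxp, hn]
  rw [this]

/-- Iterating prime powers down to the identity: whether `χ x` vanishes is decided by the
divisibility of `χ 1` by some prime divisor of the order of `x`. -/
lemma genChar_exists_prime {G : Type} [Group G] [Finite G] {χ : G → ℂ}
    (hχ : IsGenChar G χ) (hval : ∀ x : G, x ≠ 1 → χ x = 0 ∨ IsRootOfUnity (χ x))
    {n : ℤ} (hn : χ 1 = n) : ∀ x : G, x ≠ 1 →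
      ∃ p : ℕ, p.Prime ∧ p ∣ orderOf x ∧ (χ x = 0 ↔ (p : ℤ) ∣ n) := by
  intro x
  induction hm : orderOf x using Nat.strong_induction_on generalizing x with
  | _ m ih =>
    intro hx
    have h1 : m ≠ 1 := by rw [← hm]; simpa using hx
    obtain ⟨p, hp, hpm⟩ := Nat.exists_prime_and_dvd h1
    by_cases hxp : x ^ p = 1
    · exact ⟨p, hp, hpm, genChar_zero_iff_of_pow_eq_one hχ hval hn hp hx hxp⟩
    · have ho : orderOf (x ^ p) = m / p := by
        rw [orderOf_pow_of_dvd hp.ne_zero (hm ▸ hpm), hm]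
      have hmpos : 0 < m := hm ▸ orderOf_pos x
      obtain ⟨q, hq, hqd, hqi⟩ := ih (m / p) (Nat.div_lt_self hmpos hp.one_lt) (x ^ p) ho hxp
      exact ⟨q, hq, hqd.trans (Nat.div_dvd_of_dvd hpm),
        (genChar_zero_iff_pow hχ hval hp hxp).trans hqi⟩

/-- The two sides of the prime graph are the primes that divide `χ 1` and those that do not. If `g`
has order `p * q`, then `χ g = 0` is equivalent to `q ∣ χ 1` (through `g ^ p`) and to `p ∣ χ 1`
(through `g ^ q`). -/
lemma disconnected_of_genChar (G : Type) [Group G] [Fintype G] {χ : G → ℂ}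
    (hχ : IsGenChar G χ) (hval : ∀ x : G, x ≠ 1 → χ x = 0 ∨ IsRootOfUnity (χ x))
    (h0 : ∃ x : G, x ≠ 1 ∧ χ x = 0) (h1 : ∃ y : G, y ≠ 1 ∧ IsRootOfUnity (χ y)) :
    ∃ S T : Set ℕ, S.Nonempty ∧ T.Nonempty ∧ Disjoint S T ∧
        S ∪ T = {p : ℕ | p.Prime ∧ p ∣ Fintype.card G} ∧
        ∀ p ∈ S, ∀ q ∈ T, ¬ ∃ g : G, orderOf g = p * q := by
  obtain ⟨n, hn⟩ := genChar_one hχ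
  refine ⟨{p | (p.Prime ∧ p ∣ Fintype.card G) ∧ (p : ℤ) ∣ n},
    {p | (p.Prime ∧ p ∣ Fintype.card G) ∧ ¬ (p : ℤ) ∣ n}, ?_, ?_, ?_, ?_, ?_⟩
  · obtain ⟨x, hx, hx0⟩ := h0
    obtain ⟨p, hp, hpx, hi⟩ := genChar_exists_prime hχ hval hn x hx
    exact ⟨p, ⟨hp, hpx.trans orderOf_dvd_card⟩, hi.1 hx0⟩
  · obtain ⟨y, hy, k, hk, hyk⟩ := h1
    obtain ⟨p, hp, hpx, hi⟩ := genChar_exists_prime hχ hval hn y hy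
    refine ⟨p, ⟨hp, hpx.trans orderOf_dvd_card⟩, fun hd => ?_⟩
    rw [hi.2 hd, zero_pow hk.ne'] at hyk
    exact zero_ne_one hyk
  · exact Set.disjoint_left.2 fun p hp hp' => hp'.2 hp.2
  · ext p
    simp only [Set.mem_union, Set.mem_ofPred_eq]
    tauto
  · rintro p ⟨⟨hp, -⟩, hpn⟩ q ⟨⟨hq, -⟩, hqn⟩ ⟨g, hg⟩
    have ne1 : ∀ r : ℕ, 0 < r → r < p * q → g ^ r ≠ 1 := fun r hr hr' h =>
      (Nat.le_of_dvd hr (hg ▸ orderOf_dvd_of_pow_eq_one h)).not_gt hr'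
    have hgp : g ^ p ≠ 1 := ne1 p hp.pos (lt_mul_of_one_lt_right hp.pos hq.one_lt)
    have hgq : g ^ q ≠ 1 := ne1 q hq.pos (lt_mul_of_one_lt_left hq.pos hp.one_lt)
    have hpq : g ^ (p * q) = 1 := hg ▸ pow_orderOf_eq_one g
    refine hqn ?_
    rw [← genChar_zero_iff_of_pow_eq_one hχ hval hn hq hgp (by rw [← pow_mul, hpq]),
      ← genChar_zero_iff_pow hχ hval hp hgp, genChar_zero_iff_pow hχ hval hq hgq,
      genChar_zero_iff_of_pow_eq_one hχ hval hn hp hgq (by rw [← pow_mul, mul_comm, hpq])]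
    exact hpn

/-! ### The ring of permutation characters -/

/-- The number of fixed points of `g` on a `G`-set `X`: the permutation character of `X`. -/
noncomputable def fixCount (G X : Type) [Group G] [MulAction G X] (g : G) : ℤ :=
  Nat.card (MulAction.fixedBy X g)

lemma fixCount_prod (G X Y : Type) [Group G] [MulAction G X] [MulAction G Y] (g : G) :
    fixCount G (X × Y) g = fixCount G X g * fixCount G Y g := by
  rw [fixCount, fixCount, fixCount, ← Nat.cast_mul, ← Nat.card_prod]
  congr 1
  refine Nat.card_congr ⟨fun z => (⟨z.1.1, congrArg Prod.fst z.2⟩, ⟨z.1.2, congrArg Prod.snd z.2⟩),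
    fun z => ⟨(z.1.1, z.2.1), Prod.ext z.1.2 z.2.2⟩, fun _ => rfl, fun _ => rfl⟩

lemma fixCount_sum (G X Y : Type) [Group G] [MulAction G X] [MulAction G Y] [Finite X] [Finite Y]
    (g : G) : fixCount G (X ⊕ Y) g = fixCount G X g + fixCount G Y g := by
  rw [fixCount, fixCount, fixCount, ← Nat.cast_add, ← Nat.card_sum]
  congr 1
  refine Nat.card_congr ⟨fun z => match z with
      | ⟨Sum.inl a, h⟩ => Sum.inl ⟨a, Sum.inl_injective h⟩
      | ⟨Sum.inr b, h⟩ => Sum.inr ⟨b, Sum.inr_injective h⟩,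
    fun z => match z with
      | Sum.inl a => ⟨Sum.inl a.1, congrArg Sum.inl a.2⟩
      | Sum.inr b => ⟨Sum.inr b.1, congrArg Sum.inr b.2⟩, ?_, ?_⟩
  · rintro ⟨a | b, h⟩ <;> rfl
  · rintro (a | b) <;> rfl

/-- The unique action of `G` on the empty type. -/
abbrev emptyAction (G : Type) [Group G] : MulAction G Empty where
  smul _ x := x
  one_smul _ := rfl
  mul_smul _ _ _ := rfl

/-- The ring of integral combinations of permutation characters of `G`, written as differences of
two permutation characters. -/
def permRing (G : Type) [Group G] : Subring (G → ℤ) where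
  carrier := {f | ∃ (X Y : Type) (_ : MulAction G X) (_ : MulAction G Y) (_ : Finite X)
    (_ : Finite Y), ∀ g, f g = fixCount G X g - fixCount G Y g}
  mul_mem' := by
    rintro f f' ⟨X, Y, _, _, _, _, h⟩ ⟨X', Y', _, _, _, _, h'⟩
    refine ⟨X × X' ⊕ Y × Y', X × Y' ⊕ Y × X', inferInstance, inferInstance, inferInstance,
      inferInstance, fun g => ?_⟩
    simp only [Pi.mul_apply, h, h', fixCount_sum, fixCount_prod]
    ring
  one_mem' := by
    let _ : MulAction G Unit := { smul := fun _ _ => (), one_smul := fun _ => rfl,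
                                  mul_smul := fun _ _ _ => rfl }
    let _ := emptyAction G
    refine ⟨Unit, Empty, inferInstance, inferInstance, inferInstance, inferInstance, fun g => ?_⟩
    have h1 : MulAction.fixedBy Unit g = Set.univ := by ext x; simp
    simp [fixCount, h1]
  add_mem' := by
    rintro f f' ⟨X, Y, _, _, _, _, h⟩ ⟨X', Y', _, _, _, _, h'⟩
    refine ⟨X ⊕ X', Y ⊕ Y', inferInstance, inferInstance, inferInstance, inferInstance,
      fun g => ?_⟩
    simp only [Pi.add_apply, h, h', fixCount_sum]
    ring
  zero_mem' := by
    let _ := emptyAction G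
    exact ⟨Empty, Empty, inferInstance, inferInstance, inferInstance, inferInstance,
      fun g => by simp⟩
  neg_mem' := by
    rintro f ⟨X, Y, _, _, _, _, h⟩
    exact ⟨Y, X, inferInstance, inferInstance, inferInstance, inferInstance,
      fun g => by simp [h]⟩

lemma fixCount_mem_permRing (G X : Type) [Group G] [MulAction G X] [Finite X] :
    fixCount G X ∈ permRing G := by
  let _ := emptyAction G
  exact ⟨X, Empty, inferInstance, inferInstance, inferInstance, inferInstance,
      fun g => by simp [fixCount]⟩

/-- The permutation representation on functions `X → ℂ` has character `fixCount G X`. -/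
lemma exists_fdRep_fixCount (G X : Type) [Group G] [MulAction G X] [Finite X] :
    ∃ V : FDRep ℂ G, ∀ g, V.character g = fixCount G X g := by
  classical
  have := Fintype.ofFinite X
  let ρ : Representation ℂ G (X → ℂ) :=
    { toFun := fun g => LinearMap.funLeft ℂ ℂ (fun x => g⁻¹ • x)
      map_one' := by ext; simp [LinearMap.funLeft]
      map_mul' := fun g h => by
        apply LinearMap.ext; intro f; funext x
        simp [LinearMap.funLeft_apply, mul_smul] }
  refine ⟨FDRep.of ρ, fun g => ?_⟩
  have h1 : (FDRep.of ρ).character g = LinearMap.trace ℂ (X → ℂ) (ρ g) := rfl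
  rw [h1, LinearMap.trace_eq_matrix_trace ℂ (Pi.basisFun ℂ X), Matrix.trace, fixCount,
    Nat.card_eq_fintype_card, Fintype.card_subtype]
  have h2 : ∀ x : X, (LinearMap.toMatrix (Pi.basisFun ℂ X) (Pi.basisFun ℂ X) (ρ g)).diag x =
      if x ∈ MulAction.fixedBy X g then 1 else 0 := by
    intro x
    simp only [Matrix.diag_apply, LinearMap.toMatrix_apply, Pi.basisFun_repr, Pi.basisFun_apply]
    change (Pi.single x (1 : ℂ) : X → ℂ) (g⁻¹ • x) = _
    simp only [Pi.single_apply, MulAction.mem_fixedBy, inv_smul_eq_iff, eq_comm (a := x)]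
  rw [Finset.sum_congr rfl fun x _ => h2 x, Finset.sum_boole]
  simp

lemma isGenChar_of_mem_permRing {G : Type} [Group G] {f : G → ℤ} (hf : f ∈ permRing G) :
    IsGenChar G (fun g => (f g : ℂ)) := by
  obtain ⟨X, Y, _, _, _, _, h⟩ := hf
  obtain ⟨V, hV⟩ := exists_fdRep_fixCount G X
  obtain ⟨W, hW⟩ := exists_fdRep_fixCount G Y
  exact ⟨V, W, fun g => by simp [h, hV, hW]⟩

/-! ### Rings of integer-valued functions -/

/-- Evaluation at a point as a ring homomorphism on a ring of integer-valued functions. -/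
def evalAt {α : Type} (A : Subring (α → ℤ)) (x : α) : A →+* ℤ :=
  (Pi.evalRingHom (fun _ => ℤ) x).comp A.subtype

/-- A ring of integer-valued functions contains an element that is `1` on `s` and `0` on `t` as
soon as it separates points of `s` from points of `t` modulo every prime: otherwise the ideals of
functions vanishing on `s` and on `t` lie in a common maximal ideal, hence so do the ideals of
functions vanishing at some `x ∈ s` and at some `y ∈ t`, and then values at `x` and `y` agree
modulo a prime in that maximal ideal. -/
lemma exists_indicator {α : Type} (A : Subring (α → ℤ)) (s t : Finset α)
    (hsep : ∀ x ∈ s, ∀ y ∈ t, ∀ p : ℕ, p.Prime → ∃ f ∈ A, ¬ (p : ℤ) ∣ f x - f y) :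
    ∃ e ∈ A, (∀ x ∈ s, e x = 1) ∧ (∀ y ∈ t, e y = 0) := by
  let I : Finset α → Ideal A := fun u => u.inf fun x => RingHom.ker (evalAt A x)
  have hI : ∀ u (f : A), f ∈ I u → ∀ x ∈ u, (f : α → ℤ) x = 0 := by
    intro u f hf x hx
    exact (Finset.inf_le hx : I u ≤ RingHom.ker (evalAt A x)) hf
  by_cases htop : I s ⊔ I t = ⊤
  · have h1 : (1 : A) ∈ I s ⊔ I t := htop ▸ Submodule.mem_top
    obtain ⟨f, hf, e, he, hfe⟩ := Submodule.mem_sup.1 h1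
    refine ⟨e, e.2, fun x hx => ?_, hI t e he⟩
    have := congrFun (congrArg Subtype.val hfe) x
    simpa [hI s f hf x hx] using this
  · exfalso
    obtain ⟨M, hM, hle⟩ := Ideal.exists_le_maximal _ htop
    obtain ⟨x, hx, hxM⟩ := hM.isPrime.inf_le'.1 (le_sup_left.trans hle : I s ≤ M)
    obtain ⟨y, hy, hyM⟩ := hM.isPrime.inf_le'.1 (le_sup_right.trans hle : I t ≤ M)
    let J : Ideal ℤ := M.comap (Int.castRingHom A)
    have hJ : ∀ f : A, (f : α → ℤ) x - (f : α → ℤ) y ∈ J := by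
      intro f
      have hk : ∀ z : α, RingHom.ker (evalAt A z) ≤ M →
          f - ((evalAt A z f : ℤ) : A) ∈ M := fun z hz =>
        hz (by rw [RingHom.mem_ker, map_sub, map_intCast]; simp)
      have h3 := M.sub_mem (hk y hyM) (hk x hxM)
      change (((f : α → ℤ) x - (f : α → ℤ) y : ℤ) : A) ∈ M
      convert h3 using 1
      simp [evalAt]
    obtain ⟨d, hd⟩ := IsPrincipalIdealRing.principal J
    have hd1 : d.natAbs ≠ 1 := by
      intro h
      have : J = ⊤ := by
        rw [hd]; exact Ideal.span_singleton_eq_top.2 (Int.isUnit_iff_natAbs_eq.2 h)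
      exact hM.ne_top (Ideal.comap_eq_top_iff.1 this)
    obtain ⟨p, hp, hpd⟩ := Nat.exists_prime_and_dvd hd1
    obtain ⟨f, hf, hnot⟩ := hsep x hx y hy p hp
    refine hnot ((Int.natCast_dvd.2 hpd).trans ?_)
    have := hJ ⟨f, hf⟩
    rw [hd] at this
    exact Ideal.mem_span_singleton.1 this

/-! ### Separating elements of coprime orders -/

lemma mk_mem_fixedBy_iff {G : Type} [Group G] (H : Subgroup G) (x g : G) :
    (g : G ⧸ H) ∈ MulAction.fixedBy (G ⧸ H) x ↔ g⁻¹ * x * g ∈ H := by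
  rw [MulAction.mem_fixedBy, eq_comm, MulAction.Quotient.smul_coe, smul_eq_mul, QuotientGroup.eq,
    mul_assoc]

lemma fixCount_quotient_eq_zero {G : Type} [Group G] (H : Subgroup G) (x : G)
    (h : ∀ g : G, g⁻¹ * x * g ∉ H) : fixCount G (G ⧸ H) x = 0 := by
  have : MulAction.fixedBy (G ⧸ H) x = ∅ := by
    refine Set.eq_empty_of_forall_notMem fun z => ?_
    induction z using QuotientGroup.induction_on with
    | H g => rw [mk_mem_fixedBy_iff]; exact h g
  simp [fixCount, this]

lemma conj_inv_pow {G : Type} [Group G] (g x : G) (n : ℕ) :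
    (g⁻¹ * x * g) ^ n = g⁻¹ * x ^ n * g := by
  simpa using conj_pow (i := n) (a := g⁻¹) (b := x)

lemma conj_inv_eq_one {G : Type} [Group G] {g x : G} (h : g⁻¹ * x * g = 1) : x = 1 := by
  have : x = g * (g⁻¹ * x * g) * g⁻¹ := by group
  rw [this, h]; group

/-- If `y` has `p`-power order then the number of fixed points of `y` on the cosets of a Sylow
`p`-subgroup is congruent to the index, hence prime to `p`. -/
lemma not_dvd_fixCount_sylow {G : Type} [Group G] [Finite G] {p : ℕ} [Fact p.Prime]
    (P : Sylow p G) {y : G} {k : ℕ} (hy : y ^ p ^ k = 1) :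
    ¬ (p : ℤ) ∣ fixCount G (G ⧸ (P : Subgroup G)) y := by
  have hpg : IsPGroup p (Subgroup.zpowers y) := by
    rintro ⟨z, n, rfl⟩
    refine ⟨k, Subtype.ext ?_⟩
    change (y ^ n) ^ p ^ k = 1
    rw [← zpow_natCast, zpow_comm, zpow_natCast, hy, one_zpow]
  have hcard := hpg.card_modEq_card_fixedPoints (G ⧸ (P : Subgroup G))
  have hfix : MulAction.fixedPoints (Subgroup.zpowers y) (G ⧸ (P : Subgroup G)) =
      MulAction.fixedBy (G ⧸ (P : Subgroup G)) y := by
    ext z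
    constructor
    · intro h
      exact h ⟨y, Subgroup.mem_zpowers y⟩
    · rintro h ⟨_, n, rfl⟩
      exact MulAction.mem_fixedBy_zpow h n
  rw [hfix] at hcard
  intro hd
  rw [fixCount, Int.natCast_dvd_natCast] at hd
  exact P.not_dvd_index ((Nat.ModEq.dvd_iff hcard dvd_rfl).2 hd)

/-- For `x` of order prime to `p` there is a subgroup `H`, an extension of `⟨x⟩` by a Sylow
`p`-subgroup of `N(⟨x⟩) / ⟨x⟩`, such that the number of fixed points of `x` on the cosets of `H`
is `|N(⟨x⟩) : H|`, which is prime to `p`. -/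
lemma exists_subgroup_not_dvd_fixCount {G : Type} [Group G] [Finite G] {p : ℕ} [hp : Fact p.Prime]
    {x : G} (hpx : ¬ p ∣ orderOf x) :
    ∃ H : Subgroup G, (∀ h ∈ H, ∃ k : ℕ, h ^ p ^ k ∈ Subgroup.zpowers x) ∧
      ¬ (p : ℤ) ∣ fixCount G (G ⧸ H) x := by
  set C := Subgroup.zpowers x with hC
  let N := Subgroup.normalizer (C : Set G)
  have hCN : C ≤ N := Subgroup.le_normalizer
  let C' := C.subgroupOf N
  have hnorm : C'.Normal := Subgroup.normal_in_normalizer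
  let Q : Sylow p (N ⧸ C') := default
  let K : Subgroup N := (Q : Subgroup (N ⧸ C')).comap (QuotientGroup.mk' C')
  let H : Subgroup G := K.map N.subtype
  have hmem : ∀ n : N, (n : G) ∈ H ↔ n ∈ K := fun n =>
    Subgroup.mem_map_iff_mem N.subtype_injective
  have hpow : ∀ h ∈ H, ∃ k : ℕ, h ^ p ^ k ∈ C := by
    rintro _ ⟨n, hn, rfl⟩
    obtain ⟨k, hk⟩ := Q.isPGroup' ⟨QuotientGroup.mk' C' n, hn⟩
    refine ⟨k, ?_⟩
    have h1 : QuotientGroup.mk' C' (n ^ p ^ k) = 1 := by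
      rw [map_pow]; exact congrArg Subtype.val hk
    have h2 : n ^ p ^ k ∈ C' := (QuotientGroup.eq_one_iff _).1 h1
    exact Subgroup.mem_subgroupOf.1 h2
  have hCH : C ≤ H := by
    intro c hc
    refine (hmem ⟨c, hCN hc⟩).2 ?_
    have : QuotientGroup.mk' C' ⟨c, hCN hc⟩ = 1 :=
      (QuotientGroup.eq_one_iff _).2 (Subgroup.mem_subgroupOf.2 hc)
    change QuotientGroup.mk' C' ⟨c, hCN hc⟩ ∈ Q
    rw [this]
    exact one_mem _
  refine ⟨H, hpow, ?_⟩
  -- the fixed points of `x` are exactly the cosets `gH` with `g` normalizing `⟨x⟩`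
  have hfix : MulAction.fixedBy (G ⧸ H) x = MulAction.orbit N ((1 : G) : G ⧸ H) := by
    ext z
    induction z using QuotientGroup.induction_on with
    | H g =>
      rw [mk_mem_fixedBy_iff]
      constructor
      · intro hg
        obtain ⟨k, hk⟩ := hpow _ hg
        -- `g⁻¹xg` has order prime to `p`, so it is a power of its `p ^ k`-th power
        have hgC : g⁻¹ * x * g ∈ C := by
          have ho : orderOf (g⁻¹ * x * g) = orderOf x := by
            simpa using (MulAut.conj g⁻¹).orderOf_eq x
          have hcop : (orderOf (g⁻¹ * x * g)).Coprime (p ^ k) := by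
            rw [ho]
            exact (((Nat.Prime.coprime_iff_not_dvd hp.out).2 hpx).pow_left k).symm
          obtain ⟨m, hm⟩ := exists_pow_eq_self_of_coprime hcop.symm
          rw [← hm]
          exact C.pow_mem hk m
        have hgN : g⁻¹ ∈ N := by
          rw [Subgroup.mem_normalizer_iff_map_conj_eq]
          refine Subgroup.eq_of_le_of_card_ge ?_ (Subgroup.card_map_of_injective
            (MulAut.conj g⁻¹).injective).ge
          rw [hC, MonoidHom.map_zpowers, Subgroup.zpowers_le]
          simpa using hgC
        refine ⟨⟨g, by simpa using N.inv_mem hgN⟩, ?_⟩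
        change ((g * 1 : G) : G ⧸ H) = g
        rw [mul_one]
      · rintro ⟨⟨n, hn⟩, hng⟩
        change ((n * 1 : G) : G ⧸ H) = g at hng
        rw [← mk_mem_fixedBy_iff, ← hng, mul_one, mk_mem_fixedBy_iff]
        refine hCH ?_
        have := (Subgroup.mem_normalizer_iff.1 (N.inv_mem hn) x).1 (Subgroup.mem_zpowers x)
        simpa using this
  have hstab : MulAction.stabilizer N ((1 : G) : G ⧸ H) = K := by
    ext n
    rw [MulAction.mem_stabilizer_iff, ← hmem]
    change ((n * 1 : G) : G ⧸ H) = _ ↔ _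
    rw [mul_one, eq_comm, QuotientGroup.eq]
    simp
  have hcount : fixCount G (G ⧸ H) x = ((Q : Subgroup (N ⧸ C')).index : ℤ) := by
    rw [fixCount, hfix, Nat.card_coe_set_eq, ← MulAction.index_stabilizer, hstab,
      Subgroup.index_comap_of_surjective _ (QuotientGroup.mk'_surjective C')]
  rw [hcount, Int.natCast_dvd_natCast]
  exact Q.not_dvd_index

/-- Modulo `p`, the elements `x` and `y` are separated by the cosets of a Sylow `p`-subgroup if `y`
has `p`-power order, and otherwise by the cosets of the extension of `⟨x⟩` by a `p`-group given by
`exists_subgroup_not_dvd_fixCount`: in each case one of the two elements has no fixed points. -/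
lemma separates_of_not_dvd {G : Type} [Group G] [Finite G] {x y : G} (hx : x ≠ 1)
    (hco : (orderOf x).Coprime (orderOf y)) {p : ℕ} (hp : p.Prime) (hpx : ¬ p ∣ orderOf x) :
    ∃ f ∈ permRing G, ¬ (p : ℤ) ∣ f x - f y := by
  have : Fact p.Prime := ⟨hp⟩
  have hxk : ∀ k : ℕ, x ^ p ^ k ≠ 1 := fun k h =>
    hx (by
      rw [← orderOf_eq_one_iff]
      exact Nat.Coprime.eq_one_of_dvd
        (((Nat.Prime.coprime_iff_not_dvd hp).2 hpx).pow_left k).symm (orderOf_dvd_of_pow_eq_one h))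
  by_cases hyk : ∃ k : ℕ, y ^ p ^ k = 1
  · obtain ⟨k, hk⟩ := hyk
    let P : Sylow p G := default
    refine ⟨_, fixCount_mem_permRing G (G ⧸ (P : Subgroup G)), ?_⟩
    rw [fixCount_quotient_eq_zero (P : Subgroup G) x, zero_sub, dvd_neg]
    · exact not_dvd_fixCount_sylow P hk
    · intro g hg
      obtain ⟨m, hm⟩ := P.isPGroup' ⟨_, hg⟩
      have h1 : (g⁻¹ * x * g) ^ p ^ m = 1 := congrArg Subtype.val hm
      rw [conj_inv_pow] at h1
      exact hxk m (conj_inv_eq_one h1)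
  · obtain ⟨H, hH, hnd⟩ := exists_subgroup_not_dvd_fixCount hpx
    refine ⟨_, fixCount_mem_permRing G (G ⧸ H), ?_⟩
    rwa [fixCount_quotient_eq_zero H y, sub_zero]
    intro g hg
    obtain ⟨k, hk⟩ := hH _ hg
    rw [conj_inv_pow] at hk
    refine hyk ⟨k, conj_inv_eq_one (g := g) ?_⟩
    rw [← orderOf_eq_one_iff]
    refine Nat.eq_one_of_dvd_coprimes hco (orderOf_dvd_of_mem_zpowers hk) ?_
    have : orderOf (g⁻¹ * y ^ p ^ k * g) = orderOf (y ^ p ^ k) := by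
      simpa using (MulAut.conj g⁻¹).orderOf_eq (y ^ p ^ k)
    rw [this]
    exact orderOf_pow_dvd _

/-- Permutation characters separate nonidentity elements of coprime orders modulo every prime. -/
lemma separates_of_coprime {G : Type} [Group G] [Finite G] {x y : G} (hx : x ≠ 1) (hy : y ≠ 1)
    (hco : (orderOf x).Coprime (orderOf y)) {p : ℕ} (hp : p.Prime) :
    ∃ f ∈ permRing G, ¬ (p : ℤ) ∣ f x - f y := by
  by_cases hpx : p ∣ orderOf x
  · have hpy : ¬ p ∣ orderOf y := fun h => hp.one_lt.ne' (Nat.eq_one_of_dvd_coprimes hco hpx h)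
    obtain ⟨f, hf, hd⟩ := separates_of_not_dvd hy hco.symm hp hpy
    exact ⟨f, hf, by rwa [dvd_sub_comm]⟩
  · exact separates_of_not_dvd hx hco hp hpx

/-- A combination of permutation characters that is `1` on the nonidentity elements whose order
involves primes of `S` and `0` on those whose order involves primes of `T`. -/
lemma genChar_of_disconnected (G : Type) [Group G] [Fintype G] {S T : Set ℕ} (hS : S.Nonempty)
    (hT : T.Nonempty) (hdisj : Disjoint S T)
    (hST : S ∪ T = {p : ℕ | p.Prime ∧ p ∣ Fintype.card G})
    (hno : ∀ p ∈ S, ∀ q ∈ T, ¬ ∃ g : G, orderOf g = p * q) :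
    ∃ χ : G → ℂ, IsGenChar G χ ∧
        (∀ x : G, x ≠ 1 → χ x = 0 ∨ IsRootOfUnity (χ x)) ∧
        (∃ x : G, x ≠ 1 ∧ χ x = 0) ∧
        (∃ y : G, y ≠ 1 ∧ IsRootOfUnity (χ y)) := by
  classical
  have hpr : ∀ p, p ∈ S ∨ p ∈ T ↔ p.Prime ∧ p ∣ Fintype.card G := fun p => by
    rw [← Set.mem_union, hST]; rfl
  have hone : IsRootOfUnity 1 := ⟨1, one_pos, by simp⟩
  have hcop : ∀ x y : G, (∃ p ∈ S, p ∣ orderOf x) → (¬ ∃ p ∈ S, p ∣ orderOf y) →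
      (orderOf x).Coprime (orderOf y) := by
    rintro x y ⟨p, hpS, hpx⟩ hy
    refine Nat.coprime_of_dvd fun r hr hrx hry => ?_
    rcases (hpr r).2 ⟨hr, hrx.trans orderOf_dvd_card⟩ with h | h
    · exact hy ⟨r, h, hry⟩
    · have hp : p.Prime := ((hpr p).1 (Or.inl hpS)).1
      have hne : p ≠ r := fun e => Set.disjoint_left.1 hdisj hpS (e ▸ h)
      have hd : p * r ∣ orderOf x :=
        ((Nat.coprime_primes hp hr).2 hne).mul_dvd_of_dvd_of_dvd hpx hrx
      exact hno p hpS r h ⟨x ^ (orderOf x / (p * r)),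
        orderOf_pow_orderOf_div (orderOf_pos x).ne' hd⟩
  obtain ⟨e, he, he1, he0⟩ := exists_indicator (permRing G)
    (Finset.univ.filter fun x : G => x ≠ 1 ∧ ∃ p ∈ S, p ∣ orderOf x)
    (Finset.univ.filter fun x : G => x ≠ 1 ∧ ¬ ∃ p ∈ S, p ∣ orderOf x) (by
      intro x hx y hy p hp
      simp only [Finset.mem_filter, Finset.mem_univ, true_and] at hx hy
      exact separates_of_coprime hx.1 hy.1 (hcop x y hx.2 hy.2) hp)
  simp only [Finset.mem_filter, Finset.mem_univ, true_and] at he1 he0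
  refine ⟨fun g => (e g : ℂ), isGenChar_of_mem_permRing he, ?_, ?_, ?_⟩
  · intro x hx
    by_cases h : ∃ p ∈ S, p ∣ orderOf x
    · right; simpa [he1 x ⟨hx, h⟩] using hone
    · left; simp [he0 x ⟨hx, h⟩]
  · obtain ⟨q, hq⟩ := hT
    obtain ⟨hqp, hqd⟩ := (hpr q).1 (Or.inr hq)
    have : Fact q.Prime := ⟨hqp⟩
    obtain ⟨x, hx⟩ := exists_prime_orderOf_dvd_card q hqd
    have hx1 : x ≠ 1 := by rintro rfl; exact hqp.one_lt.ne (by simpa using hx)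
    refine ⟨x, hx1, ?_⟩
    have h : ¬ ∃ p ∈ S, p ∣ orderOf x := by
      rintro ⟨p, hpS, hpx⟩
      rw [hx, Nat.prime_dvd_prime_iff_eq ((hpr p).1 (Or.inl hpS)).1 hqp] at hpx
      exact Set.disjoint_left.1 hdisj hpS (hpx ▸ hq)
    simp [he0 x ⟨hx1, h⟩]
  · obtain ⟨q, hq⟩ := hS
    obtain ⟨hqp, hqd⟩ := (hpr q).1 (Or.inl hq)
    have : Fact q.Prime := ⟨hqp⟩
    obtain ⟨x, hx⟩ := exists_prime_orderOf_dvd_card q hqd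
    have hx1 : x ≠ 1 := by rintro rfl; exact hqp.one_lt.ne (by simpa using hx)
    refine ⟨x, hx1, ?_⟩
    simpa [he1 x ⟨hx1, q, hq, hx.symm.dvd⟩] using hone

theorem stmt_2 (G : Type) [Group G] [Fintype G] :
    -- the prime graph Γ(G) is disconnected
    (∃ S T : Set ℕ, S.Nonempty ∧ T.Nonempty ∧ Disjoint S T ∧
        S ∪ T = {p : ℕ | p.Prime ∧ p ∣ Fintype.card G} ∧
        ∀ p ∈ S, ∀ q ∈ T, ¬ ∃ g : G, orderOf g = p * q) ↔
    -- iff there is a generalized character, zero or a root of unity on G⁺, taking both kinds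
    -- of values on nonidentity elements
    (∃ χ : G → ℂ, IsGenChar G χ ∧
        (∀ x : G, x ≠ 1 → χ x = 0 ∨ IsRootOfUnity (χ x)) ∧
        (∃ x : G, x ≠ 1 ∧ χ x = 0) ∧
        (∃ y : G, y ≠ 1 ∧ IsRootOfUnity (χ y))) := by
  constructor
  · rintro ⟨S, T, hS, hT, hdisj, hST, hno⟩
    exact genChar_of_disconnected G hS hT hdisj hST hno
  · rintro ⟨χ, hχ, hval, h0, h1⟩
    exact disconnected_of_genChar G hχ hval h0 h1
end

section
/- Let G be the dihedral group of order 30 (the semidirect product of a cyclic group of order 15 by a cyclic group of order 2 whose involution acts by inversion). Then there exists a generalized character χ of G such that χ(x) is a sum of at most two roots of unity for every nonidentity x ∈ G, and there exist nonidentity elements x, y, z ∈ G with χ(x) = 0, χ(y) = 1, and χ(z) = −2. -/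
open DihedralGroup

/-- The permutation action of the dihedral group of order 30 on `ℤ/3`. -/
def dihedralPerm : DihedralGroup 15 →* Equiv.Perm (ZMod 3) where
  toFun
    | r i => Equiv.addRight (ZMod.castHom (by decide : 3 ∣ 15) (ZMod 3) i)
    | sr i => Equiv.subLeft (-ZMod.castHom (by decide : 3 ∣ 15) (ZMod 3) i)
  map_one' := by
    rw [one_def]
    ext x
    simp
  map_mul' := by
    rintro (i | i) (j | j) <;> ext x <;>
      simp only [r_mul_r, r_mul_sr, sr_mul_r, sr_mul_sr, map_add, map_sub, Equiv.Perm.mul_apply,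
        Equiv.coe_addRight, Equiv.subLeft_apply] <;> ring_nf

/-- The number of points of `ℤ/3` fixed by `g`. -/
def fixedCount (g : DihedralGroup 15) : ℕ :=
  (Finset.univ.filter fun x : ZMod 3 => dihedralPerm g x = x).card

/-- The complex permutation representation attached to `dihedralPerm`. -/
noncomputable def dihedralRep : Representation ℂ (DihedralGroup 15) (ZMod 3 → ℂ) :=
  ((Matrix.toLinAlgEquiv' : Matrix (ZMod 3) (ZMod 3) ℂ ≃ₐ[ℂ] _) :
    Matrix (ZMod 3) (ZMod 3) ℂ →* ((ZMod 3 → ℂ) →ₗ[ℂ] (ZMod 3 → ℂ))).comp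
    (Matrix.permMatrixHom.comp dihedralPerm)

lemma character_dihedralRep (g : DihedralGroup 15) :
    (FDRep.of dihedralRep).character g = fixedCount g := by
  change LinearMap.trace ℂ (ZMod 3 → ℂ)
    (Matrix.toLin' ((dihedralPerm g)⁻¹.permMatrix ℂ)) = _
  rw [Matrix.trace_toLin'_eq, Matrix.trace_permutation, fixedCount, ← Set.ncard_coe_finset]
  congr 2
  ext x
  simp [Function.mem_fixedPoints, Function.IsFixedPt, eq_comm]

lemma character_trivial (g : DihedralGroup 15) :
    (FDRep.of (Representation.trivial ℂ (DihedralGroup 15) ℂ)).character g = 1 := by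
  change LinearMap.trace ℂ ℂ LinearMap.id = 1
  simp

lemma card_fixed_cases (g : DihedralGroup 15) :
    fixedCount g = 0 ∨ fixedCount g = 1 ∨ fixedCount g = 3 := by
  rcases g with i | i <;> revert i <;> decide

theorem stmt_5 :
    ∃ χ : DihedralGroup 15 → ℂ, IsGenChar (DihedralGroup 15) χ ∧
      (∀ x : DihedralGroup 15, x ≠ 1 → IsSumAtMostTwoRootsOfUnity (χ x)) ∧
      (∃ x : DihedralGroup 15, x ≠ 1 ∧ χ x = 0) ∧
      (∃ y : DihedralGroup 15, y ≠ 1 ∧ χ y = 1) ∧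
      (∃ z : DihedralGroup 15, z ≠ 1 ∧ χ z = -2) := by
  refine ⟨fun g => 1 - (fixedCount g : ℂ),
    ⟨FDRep.of (Representation.trivial ℂ (DihedralGroup 15) ℂ), FDRep.of dihedralRep,
      fun g => by rw [character_trivial, character_dihedralRep]⟩,
    fun g _ => ?_, ⟨sr 0, by decide, ?_⟩, ⟨r 1, by decide, ?_⟩, ⟨r 3, by decide, ?_⟩⟩
  · rcases card_fixed_cases g with h | h | h
    · exact Or.inr (Or.inl ⟨1, one_pos, by simp [h]⟩)
    · exact Or.inl (by simp [h])
    · -- `-2 = (-1) + (-1)`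
      exact Or.inr (Or.inr ⟨-1, -1, ⟨2, two_pos, by norm_num⟩, ⟨2, two_pos, by norm_num⟩,
        by norm_num [h]⟩)
  · have h : fixedCount (sr 0) = 1 := by decide
    norm_num [h]
  · have h : fixedCount (r 1) = 0 := by decide
    norm_num [h]
  · have h : fixedCount (r 3) = 3 := by decide
    norm_num [h]
end

section
/- Let G be a finite group, p a prime dividing |G|, and χ a generalized character of G with (integer) virtual degree d = χ(1). If there exists a p-element x ∈ G such that χ(x) is a root of unity, then d ≡ 1 (mod p) or d ≡ −1 (mod p). -/
theorem exists_eigenvalue_multiset {G : Type} [Group G] (V : FDRep ℂ G) (x : G) {q : ℕ}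
    (hx : x ^ q = 1) :
    ∃ S : Multiset ℂ, V.character 1 = (Multiset.card S : ℂ) ∧ V.character x = S.sum ∧
      ∀ μ ∈ S, μ ^ q = 1 := by
  have hsplit : (V.ρ x).charpoly.Splits := IsAlgClosed.splits _
  refine ⟨(V.ρ x).charpoly.roots, ?_, ?_, ?_⟩
  · rw [FDRep.char_one, ← hsplit.natDegree_eq_card_roots, LinearMap.charpoly_natDegree]
  · exact Module.End.trace_eq_sum_roots_charpoly_of_splits hsplit
  · intro μ hμ
    have hev : Module.End.HasEigenvalue (V.ρ x) μ :=
      (Module.End.hasEigenvalue_iff_isRoot_charpoly _ _).2 (Polynomial.isRoot_of_mem_roots hμ)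
    obtain ⟨v, hv⟩ := hev.exists_hasEigenvector
    have h := hv.pow_apply q
    rw [← map_pow, hx, map_one, Module.End.one_apply] at h
    have h0 : (μ ^ q - 1) • v = 0 := by rw [sub_smul, one_smul, ← h, sub_self]
    exact sub_eq_zero.1 ((smul_eq_zero.1 h0).resolve_right hv.2)

/-- Reduction of algebraic integers modulo a maximal ideal above `p`. -/
theorem exists_reduction {p : ℕ} (hp : p.Prime) :
    ∃ (k : Type) (_ : Field k) (_ : CharP k p), Nonempty (integralClosure ℤ ℂ →+* k) := by
  have hpZ : Prime (p : ℤ) := Nat.prime_iff_prime_int.1 hp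
  have : (Ideal.span {(p : ℤ)}).IsMaximal :=
    PrincipalIdealRing.isMaximal_of_irreducible hpZ.irreducible
  obtain ⟨Q, hQ, hQp⟩ := Ideal.exists_ideal_over_maximal_of_isIntegral
    (S := integralClosure ℤ ℂ) (Ideal.span {(p : ℤ)}) (by
      rw [(RingHom.injective_iff_ker_eq_bot _).1
        (FaithfulSMul.algebraMap_injective ℤ (integralClosure ℤ ℂ))]
      exact bot_le)
  let := Ideal.Quotient.field Q
  refine ⟨integralClosure ℤ ℂ ⧸ Q, inferInstance, ?_, ⟨Ideal.Quotient.mk Q⟩⟩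
  refine ⟨fun m => ?_⟩
  rw [← map_natCast (Ideal.Quotient.mk Q), Ideal.Quotient.eq_zero_iff_mem]
  have h : (m : ℤ) ∈ Q.comap (algebraMap ℤ (integralClosure ℤ ℂ)) ↔ p ∣ m := by
    rw [hQp, Ideal.mem_span_singleton, Int.natCast_dvd_natCast]
  rw [← h, Ideal.mem_comap, map_natCast]

/-- A sum of `p ^ n`-th roots of unity reduces in characteristic `p` to its number of summands. -/
theorem exists_lift_sum {p n : ℕ} (hp : p.Prime) {k : Type} [Field k] [CharP k p]
    (f : integralClosure ℤ ℂ →+* k) (S : Multiset ℂ) (hS : ∀ μ ∈ S, μ ^ p ^ n = 1) :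
    ∃ r : integralClosure ℤ ℂ, (r : ℂ) = S.sum ∧ f r = (Multiset.card S : k) := by
  have : Fact p.Prime := ⟨hp⟩
  induction S using Multiset.induction with
  | empty => exact ⟨0, by simp⟩
  | cons a S ih =>
    obtain ⟨r, hr, hfr⟩ := ih fun μ hμ => hS μ (Multiset.mem_cons_of_mem hμ)
    have ha := hS a (Multiset.mem_cons_self a S)
    have hint : IsIntegral ℤ a := by
      refine IsIntegral.of_pow (pow_pos hp.pos n) ?_
      rw [ha]
      exact isIntegral_one
    let b : integralClosure ℤ ℂ := ⟨a, hint⟩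
    have hb : b ^ p ^ n = 1 := Subtype.ext ha
    have hfb : f b = 1 := by
      have h1 : f b ^ p ^ n = 1 := by rw [← map_pow, hb, map_one]
      have h2 : (f b - 1) ^ p ^ n = 0 := by rw [sub_pow_char_pow, h1, one_pow, sub_self]
      exact sub_eq_zero.1 (pow_eq_zero_iff (pow_pos hp.pos n).ne' |>.1 h2)
    refine ⟨b + r, ?_, ?_⟩
    · rw [Multiset.sum_cons, ← hr]
      rfl
    · rw [map_add, hfb, hfr, Multiset.card_cons]
      push_cast
      ring

/-- A root of unity that is a difference of two sums of `q`-th roots of unity lies in the `q`-th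
cyclotomic field, and therefore has order dividing `2 * q`. -/
theorem pow_two_mul_eq_one {q : ℕ} (hq : q ≠ 0) (S T : Multiset ℂ) (hS : ∀ μ ∈ S, μ ^ q = 1)
    (hT : ∀ μ ∈ T, μ ^ q = 1) {m : ℕ} (hm : 0 < m) (hu : (S.sum - T.sum) ^ m = 1) :
    (S.sum - T.sum) ^ (2 * q) = 1 := by
  have : NeZero q := ⟨hq⟩
  have hζ := Complex.isPrimitiveRoot_exp q hq
  set ζ := Complex.exp (2 * Real.pi * Complex.I / q)
  have hcyc : IsCyclotomicExtension {q} ℚ (IntermediateField.adjoin ℚ {ζ}) :=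
    (IntermediateField.isCyclotomicExtension_singleton_iff_eq_adjoin q ℚ ℂ _ hζ).2 rfl
  have : NumberField (IntermediateField.adjoin ℚ {ζ}) := IsCyclotomicExtension.numberField {q} ℚ _
  have hmem : ∀ μ : ℂ, μ ^ q = 1 → μ ∈ IntermediateField.adjoin ℚ {ζ} := by
    intro μ hμ
    obtain ⟨i, -, rfl⟩ := hζ.eq_pow_of_pow_eq_one hμ
    exact pow_mem (IntermediateField.mem_adjoin_simple_self ℚ ζ) i
  let u : IntermediateField.adjoin ℚ {ζ} := ⟨S.sum - T.sum, sub_mem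
    (multiset_sum_mem _ fun μ h => hmem μ (hS μ h)) (multiset_sum_mem _ fun μ h => hmem μ (hT μ h))⟩
  have hum : u ^ m = 1 := Subtype.ext hu
  have hpos : orderOf u ≠ 0 := (orderOf_pos_iff.2 (isOfFinOrder_iff_pow_eq_one.2 ⟨m, hm, hum⟩)).ne'
  have hdvd := (IsPrimitiveRoot.orderOf u).dvd_of_isCyclotomicExtension q hpos
  exact congrArg Subtype.val (orderOf_dvd_iff_pow_eq_one.1 hdvd)

theorem stmt_6 (G : Type) [Group G] [Fintype G] (p : ℕ) (hp : p.Prime)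
    (hpG : p ∣ Fintype.card G)
    (χ : G → ℂ) (hχ : IsGenChar G χ)
    (d : ℤ) (hd : (d : ℂ) = χ 1)
    (x : G) (hx : ∃ n : ℕ, orderOf x = p ^ n)
    (hroot : IsRootOfUnity (χ x)) :
    (p : ℤ) ∣ d - 1 ∨ (p : ℤ) ∣ d + 1 := by
  obtain ⟨n, hn⟩ := hx
  obtain ⟨V, W, hVW⟩ := hχ
  obtain ⟨m, hm, hu⟩ := hroot
  have hxq : x ^ p ^ n = 1 := hn ▸ pow_orderOf_eq_one x
  obtain ⟨S, hS1, hSx, hS⟩ := exists_eigenvalue_multiset V x hxq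
  obtain ⟨T, hT1, hTx, hT⟩ := exists_eigenvalue_multiset W x hxq
  rw [hVW, hSx, hTx] at hu
  have hd' : d = (Multiset.card S : ℤ) - (Multiset.card T : ℤ) := by
    rw [hVW, hS1, hT1] at hd
    exact_mod_cast hd
  have hu2 := pow_two_mul_eq_one (pow_pos hp.pos n).ne' S T hS hT hm hu
  obtain ⟨k, _, _, ⟨f⟩⟩ := exists_reduction hp
  obtain ⟨r, hr, hfr⟩ := exists_lift_sum hp f S hS
  obtain ⟨s, hs, hfs⟩ := exists_lift_sum hp f T hT
  have hrs : (r - s) ^ (2 * p ^ n) = 1 := by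
    apply Subtype.ext
    rw [← hr, ← hs] at hu2
    exact hu2
  have hfd : f (r - s) = (d : k) := by
    rw [map_sub, hfr, hfs, hd']
    push_cast
    rfl
  have : Fact p.Prime := ⟨hp⟩
  have h1 : ((d : k) ^ 2) ^ p ^ n = 1 := by
    rw [← pow_mul, ← hfd, ← map_pow, hrs, map_one]
  have h2 : ((d : k) ^ 2 - 1) ^ p ^ n = 0 := by rw [sub_pow_char_pow, h1, one_pow, sub_self]
  have h3 : (d : k) ^ 2 - 1 = 0 := (pow_eq_zero_iff (pow_pos hp.pos n).ne').1 h2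
  have h4 : (((d - 1) * (d + 1) : ℤ) : k) = 0 := by
    push_cast
    linear_combination h3
  exact (Nat.prime_iff_prime_int.1 hp).dvd_or_dvd ((CharP.intCast_eq_zero_iff k p _).1 h4)
end

section
/- Let G be a finite group, p a prime dividing |G|, P a Sylow p-subgroup of G, and χ a generalized character of G with (integer) virtual degree d = χ(1). Suppose χ(x) is a root of unity for every nonidentity p-element x of G. Then: if p is odd or |P| = 2, then d ≡ 1 (mod |P|) or d ≡ −1 (mod |P|); and if p = 2 and |P| ≥ 4, then d ≡ 1 (mod |P|/2) or d ≡ −1 (mod |P|/2). -/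
open scoped ComplexOrder in
/-- The value of a complex character at `g⁻¹` is the conjugate of its value at `g`. In matrix form
`M`, the positive definite matrix `H = ∑ h, (M h)ᴴ * M h` satisfies `(M g)ᴴ * H * M g = H`,
so `(M g)ᴴ = H * M g⁻¹ * H⁻¹` has the same trace as `M g⁻¹`. -/
theorem character_inv_eq_conj {G : Type} [Group G] [Fintype G] {V : Type*} [AddCommGroup V]
    [Module ℂ V] [FiniteDimensional ℂ V] (ρ : Representation ℂ G V) (g : G) :
    ρ.character g⁻¹ = star (ρ.character g) := by
  classical
  let b := Module.finBasis ℂ V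
  let M : G → Matrix (Fin (Module.finrank ℂ V)) (Fin (Module.finrank ℂ V)) ℂ :=
    fun h => LinearMap.toMatrix b b (ρ h)
  have hM : ∀ h, ρ.character h = (M h).trace := fun h =>
    LinearMap.trace_eq_matrix_trace ℂ b (ρ h)
  have hmul : ∀ h k, M (h * k) = M h * M k := fun h k => by
    simp only [M, map_mul]
    exact LinearMap.toMatrix_mul b _ _
  have hone : M 1 = 1 := by simp [M]
  let H := ∑ h, (M h).conjTranspose * M h
  have hH : H.PosDef := by
    have h1 : H = 1 + ∑ h ∈ Finset.univ.erase 1, (M h).conjTranspose * M h := by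
      simp only [H]
      rw [← Finset.add_sum_erase _ _ (Finset.mem_univ (1 : G)), hone]
      simp
    rw [h1]
    exact Matrix.PosDef.one.add_posSemidef
      (Matrix.posSemidef_sum _ fun h _ => Matrix.posSemidef_conjTranspose_mul_self _)
  have hinv : (M g).conjTranspose * H * M g = H := by
    simp only [H, Finset.mul_sum, Finset.sum_mul]
    conv_rhs => rw [← Equiv.sum_comp (Equiv.mulRight g)]
    refine Finset.sum_congr rfl fun h _ => ?_
    simp [hmul, Matrix.conjTranspose_mul, Matrix.mul_assoc]
  have hdet : IsUnit H.det := (Matrix.isUnit_iff_isUnit_det _).mp hH.isUnit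
  have hgg : M g * M g⁻¹ = 1 := by rw [← hmul, mul_inv_cancel, hone]
  have hconj : (M g).conjTranspose = H * M g⁻¹ * H⁻¹ := by
    have h2 : (M g).conjTranspose * H = H * M g⁻¹ := by
      conv_rhs => rw [← hinv]
      rw [Matrix.mul_assoc _ (M g), hgg, Matrix.mul_one]
    rw [← h2, Matrix.mul_assoc, Matrix.mul_nonsing_inv _ hdet, Matrix.mul_one]
  rw [hM, hM, ← Matrix.trace_conjTranspose, hconj, Matrix.trace_mul_comm, ← Matrix.mul_assoc,
    Matrix.nonsing_inv_mul _ hdet, Matrix.one_mul]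
/-- The inner product of a generalized character with itself is an integer. -/
theorem exists_int_sum_mul_inv {G : Type} [Group G] [Fintype G] {V W : Type*}
    [AddCommGroup V] [Module ℂ V] [FiniteDimensional ℂ V]
    [AddCommGroup W] [Module ℂ W] [FiniteDimensional ℂ W]
    (ρ : Representation ℂ G V) (σ : Representation ℂ G W) :
    ∃ m : ℤ, ∑ g, (ρ.character g - σ.character g) * (ρ.character g⁻¹ - σ.character g⁻¹) =
      (Nat.card G : ℂ) * m := by
  have hne : (Nat.card G : ℂ) ≠ 0 := Nat.cast_ne_zero.mpr Nat.card_pos.ne'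
  let _ : Invertible (Nat.card G : ℂ) := invertibleOfNonzero hne
  have h1 := Representation.card_inv_mul_sum_char_mul_char_eq_finrank ρ ρ
  have h2 := Representation.card_inv_mul_sum_char_mul_char_eq_finrank ρ σ
  have h3 := Representation.card_inv_mul_sum_char_mul_char_eq_finrank σ ρ
  have h4 := Representation.card_inv_mul_sum_char_mul_char_eq_finrank σ σ
  rw [inv_mul_eq_iff_eq_mul₀ hne] at h1 h2 h3 h4
  refine ⟨(Module.finrank ℂ (Representation.IntertwiningMap ρ ρ) : ℤ)
    - Module.finrank ℂ (Representation.IntertwiningMap ρ σ)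
    - Module.finrank ℂ (Representation.IntertwiningMap σ ρ)
    + Module.finrank ℂ (Representation.IntertwiningMap σ σ), ?_⟩
  push_cast
  simp only [sub_mul, mul_sub, mul_add, Finset.sum_sub_distrib, h1, h2, h3, h4]
  ring

/-- If `q ∣ d ^ 2 - 1` for a power `q` of an odd prime, then `q` divides one of `d - 1`, `d + 1`,
because `p` cannot divide both. -/
theorem odd_prime_pow_dvd {p n : ℕ} (hp : p.Prime) (hp2 : p ≠ 2) {d : ℤ}
    (h : ((p ^ n : ℕ) : ℤ) ∣ (d - 1) * (d + 1)) :
    ((p ^ n : ℕ) : ℤ) ∣ d - 1 ∨ ((p ^ n : ℕ) : ℤ) ∣ d + 1 := by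
  have hpi : Prime (p : ℤ) := Nat.prime_iff_prime_int.mp hp
  push_cast at h ⊢
  by_cases h1 : (p : ℤ) ∣ d - 1
  · left
    refine hpi.pow_dvd_of_dvd_mul_right n (fun h2 => hp2 ?_) h
    have h3 : (p : ℤ) ∣ 2 := by
      have := dvd_sub h2 h1
      ring_nf at this
      exact this
    exact (Nat.prime_dvd_prime_iff_eq hp Nat.prime_two).mp (by exact_mod_cast h3)
  · right
    exact hpi.pow_dvd_of_dvd_mul_left n h1 h

/-- If `2 ^ (n + 1) ∣ d ^ 2 - 1` with `n ≥ 1`, then `d` is odd and `2 ^ n` divides one of `d - 1`,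
`d + 1`: writing `d = 2 * k + 1`, the product `k * (k + 1)` is divisible by `2 ^ (n - 1)`
and its factors are coprime. -/
theorem two_pow_dvd {n : ℕ} (hn : 1 ≤ n) {d : ℤ} (h : (2 : ℤ) ^ (n + 1) ∣ (d - 1) * (d + 1)) :
    (2 : ℤ) ^ n ∣ d - 1 ∨ (2 : ℤ) ^ n ∣ d + 1 := by
  obtain ⟨m, rfl⟩ := Nat.exists_eq_add_of_le' hn
  have hodd : Odd d := by
    by_contra hc
    have he := Int.not_odd_iff_even.mp hc
    have h2 : (2 : ℤ) ∣ (d - 1) * (d + 1) := (dvd_pow_self 2 (by omega)).trans h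
    rcases Int.prime_two.dvd_or_dvd h2 with h3 | h3 <;> obtain ⟨k, hk⟩ := he <;> omega
  obtain ⟨k, rfl⟩ := hodd
  have hk : (2 : ℤ) ^ m ∣ k * (k + 1) := by
    have h4 : (4 : ℤ) * 2 ^ m ∣ 4 * (k * (k + 1)) := by
      convert h using 1 <;> ring
    exact (mul_dvd_mul_iff_left (by norm_num)).mp h4
  by_cases h1 : (2 : ℤ) ∣ k
  · left
    have h5 : (2 : ℤ) ^ m ∣ k :=
      Int.prime_two.pow_dvd_of_dvd_mul_right m (by omega) hk
    rw [pow_succ, show 2 * k + 1 - 1 = k * 2 by ring]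
    exact mul_dvd_mul_right h5 2
  · right
    have h5 : (2 : ℤ) ^ m ∣ k + 1 := Int.prime_two.pow_dvd_of_dvd_mul_left m h1 hk
    rw [pow_succ, show 2 * k + 1 + 1 = (k + 1) * 2 by ring]
    exact mul_dvd_mul_right h5 2

/-- The order of every `p`-subgroup divides `d ^ 2 - 1`. -/
theorem card_pSubgroup_dvd {G : Type} [Group G] [Fintype G] {p : ℕ} (hp : p.Prime) {P : Subgroup G}
    (hP : IsPGroup p P)
    {χ : G → ℂ} (hχ : IsGenChar G χ) {d : ℤ} (hd : (d : ℂ) = χ 1)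
    (hroot : ∀ x : G, x ≠ 1 → (∃ n : ℕ, orderOf x = p ^ n) → IsRootOfUnity (χ x)) :
    (Nat.card P : ℤ) ∣ (d - 1) * (d + 1) := by
  classical
  have : Fact p.Prime := ⟨hp⟩
  obtain ⟨V, W, hVW⟩ := hχ
  let ρ : Representation ℂ P V := V.ρ.comp P.subtype
  let σ : Representation ℂ P W := W.ρ.comp P.subtype
  have hval : ∀ x : P, ρ.character x - σ.character x = χ x := fun x => (hVW x).symm
  obtain ⟨m, hm⟩ := exists_int_sum_mul_inv ρ σ
  have hterm : ∀ x : P, x ≠ 1 → χ x * χ (x⁻¹ : P) = 1 := by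
    intro x hx
    have hinv : χ (x⁻¹ : P) = star (χ x) := by
      rw [← hval, ← hval, character_inv_eq_conj, character_inv_eq_conj, star_sub]
    obtain ⟨k, hk⟩ := IsPGroup.iff_orderOf.mp hP x
    obtain ⟨n, hn, hxn⟩ := hroot x (by simpa using hx) ⟨k, by rw [Subgroup.orderOf_coe, hk]⟩
    have hnorm : ‖χ x‖ = 1 := Complex.norm_eq_one_of_pow_eq_one hxn hn.ne'
    rw [hinv]
    have := Complex.mul_conj' (χ x)
    rw [hnorm] at this
    simpa using this
  simp only [hval] at hm
  rw [← Finset.add_sum_erase _ _ (Finset.mem_univ (1 : P)),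
    Finset.sum_congr rfl fun x hx => hterm x (Finset.ne_of_mem_erase hx)] at hm
  have hcard : ((Finset.univ.erase (1 : P)).card : ℂ) = (Nat.card P : ℂ) - 1 := by
    rw [Finset.card_erase_of_mem (Finset.mem_univ _), Finset.card_univ, ← Nat.card_eq_fintype_card,
      Nat.cast_sub Nat.card_pos, Nat.cast_one]
  rw [Finset.sum_const, nsmul_eq_mul, mul_one, hcard, inv_one, OneMemClass.coe_one, ← hd] at hm
  have hz : d * d + ((Nat.card P : ℤ) - 1) = (Nat.card P : ℤ) * m := by exact_mod_cast hm
  exact ⟨m - 1, by linear_combination hz⟩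

theorem stmt_7 (G : Type) [Group G] [Fintype G] (p : ℕ) (hp : p.Prime)
    (hpG : p ∣ Fintype.card G) (P : Sylow p G)
    (χ : G → ℂ) (hχ : IsGenChar G χ)
    (d : ℤ) (hd : (d : ℂ) = χ 1)
    (hroot : ∀ x : G, x ≠ 1 → (∃ n : ℕ, orderOf x = p ^ n) → IsRootOfUnity (χ x)) :
    ((p ≠ 2 ∨ Nat.card P = 2) →
      ((Nat.card P : ℤ) ∣ d - 1 ∨ (Nat.card P : ℤ) ∣ d + 1)) ∧
    ((p = 2 ∧ 4 ≤ Nat.card P) →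
      (((Nat.card P / 2 : ℕ) : ℤ) ∣ d - 1 ∨ ((Nat.card P / 2 : ℕ) : ℤ) ∣ d + 1)) := by
  have : Fact p.Prime := ⟨hp⟩
  have hdvd := card_pSubgroup_dvd hp P.isPGroup' hχ hd hroot
  obtain ⟨n, hn⟩ := IsPGroup.iff_card.mp P.isPGroup'
  refine ⟨?_, ?_⟩
  · rintro (hp2 | h2)
    · rw [hn] at hdvd ⊢
      exact odd_prime_pow_dvd hp hp2 hdvd
    · rw [h2] at hdvd ⊢
      exact Int.prime_two.dvd_or_dvd hdvd
  · rintro ⟨rfl, h4⟩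
    rw [hn] at hdvd h4 ⊢
    obtain ⟨k, rfl⟩ : ∃ k, n = k + 2 := by
      refine Nat.exists_eq_add_of_le' ?_
      by_contra hlt
      have : n = 0 ∨ n = 1 := by omega
      rcases this with rfl | rfl <;> norm_num at h4
    rw [pow_succ 2 (k + 1), Nat.mul_div_cancel _ two_pos]
    push_cast at hdvd ⊢
    exact two_pow_dvd (by omega) hdvd
end

section
/- Let G be a finite abelian group of odd order, and let λ₁, λ₂, λ₃ : G → ℂˣ be pairwise distinct group homomorphisms (irreducible characters of G). Then there exists g ∈ G such that λ₁(g), λ₂(g), λ₃(g) are pairwise distinct. -/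
/-!
Two distinct characters agree on a proper subgroup; since `|G|` is odd, its index is at least `3`.
If every `g` were bad, `G` would be the union of three such subgroups, each of order at most
`|G| / 3`. As all three contain `1`, their union has fewer than `|G|` elements, a contradiction.
-/

lemma three_mul_card_eqLocus_le {G : Type*} [CommGroup G] [Fintype G]
    (hodd : Odd (Fintype.card G)) (f g : G →* ℂˣ) (h : f ≠ g) :
    3 * Nat.card (f.eqLocus g) ≤ Nat.card G := by
  have hmul := (f.eqLocus g).card_mul_index
  have hodd' : Odd (f.eqLocus g).index := by
    rw [← Nat.card_eq_fintype_card, ← hmul] at hodd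
    exact (Nat.odd_mul.mp hodd).2
  have hne : (f.eqLocus g).index ≠ 1 := by
    intro h1
    rw [Subgroup.index_eq_one] at h1
    apply h
    ext1 x
    have hx : x ∈ f.eqLocus g := h1 ▸ Subgroup.mem_top x
    exact hx
  obtain ⟨k, hk⟩ := hodd'
  have h3 : 3 ≤ (f.eqLocus g).index := by omega
  rw [← hmul, mul_comm]
  exact Nat.mul_le_mul_left _ h3

theorem stmt_8 {G : Type*} [CommGroup G] [Fintype G]
    (hodd : Odd (Fintype.card G))
    (lam₁ lam₂ lam₃ : G →* ℂˣ)
    (h12 : lam₁ ≠ lam₂) (h13 : lam₁ ≠ lam₃) (h23 : lam₂ ≠ lam₃) :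
    ∃ g : G, lam₁ g ≠ lam₂ g ∧ lam₁ g ≠ lam₃ g ∧ lam₂ g ≠ lam₃ g := by
  by_contra hcon
  have hA := three_mul_card_eqLocus_le hodd _ _ h12
  have hB := three_mul_card_eqLocus_le hodd _ _ h13
  have hC := three_mul_card_eqLocus_le hodd _ _ h23
  let A : Set G := (lam₁.eqLocus lam₂ : Subgroup G)
  let B : Set G := (lam₁.eqLocus lam₃ : Subgroup G)
  let C : Set G := (lam₂.eqLocus lam₃ : Subgroup G)
  have hU : A ∪ B ∪ C = Set.univ := by
    refine Set.eq_univ_of_forall fun g => ?_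
    by_contra hg
    have hg' : ¬ ((lam₁ g = lam₂ g ∨ lam₁ g = lam₃ g) ∨ lam₂ g = lam₃ g) := hg
    push Not at hg'
    exact hcon ⟨g, hg'.1.1, hg'.1.2, hg'.2⟩
  have h1 : 0 < (A ∩ B).ncard :=
    (Set.ncard_pos (Set.toFinite _)).mpr
      ⟨1, one_mem (lam₁.eqLocus lam₂), one_mem (lam₁.eqLocus lam₃)⟩
  have h2 := Set.ncard_union_add_ncard_inter A B
  have h3 := Set.ncard_union_le (A ∪ B) C
  rw [hU, Set.ncard_univ] at h3
  change 3 * A.ncard ≤ _ at hA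
  change 3 * B.ncard ≤ _ at hB
  change 3 * C.ncard ≤ _ at hC
  omega
end

section
/- Let G be a finite abelian group and let χ be a generalized character of G whose values on all nonidentity elements are sums of at most two roots of unity. Suppose χ = a·ρ_G + ε·(λ₁ + ⋯ + λ_k) for some integer a, sign ε ∈ {1, −1}, and pairwise distinct irreducible characters λ₁, …, λ_k of G. If k = 6 then |G| ≤ 16, and if k = 7 then |G| ≤ 15. -/
lemma IsRootOfUnity.norm_eq_one {z : ℂ} (h : IsRootOfUnity z) : ‖z‖ = 1 := by
  obtain ⟨n, hn, hz⟩ := h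
  exact Complex.norm_eq_one_of_pow_eq_one hz hn.ne'

lemma norm_le_two_of_isSumAtMostTwoRootsOfUnity {z : ℂ} (h : IsSumAtMostTwoRootsOfUnity z) :
    ‖z‖ ≤ 2 := by
  rcases h with rfl | h | ⟨u, v, hu, hv, rfl⟩
  · simp
  · rw [h.norm_eq_one]; norm_num
  · have := norm_add_le u v
    rw [hu.norm_eq_one, hv.norm_eq_one] at this
    linarith

lemma norm_character_apply {G : Type*} [CommGroup G] [Fintype G] (φ : G →* ℂˣ) (g : G) :
    ‖(φ g : ℂ)‖ = 1 := by
  refine IsRootOfUnity.norm_eq_one ⟨Fintype.card G, Fintype.card_pos, ?_⟩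
  rw [← Units.val_pow_eq_pow_val, ← map_pow, pow_card_eq_one]
  simp

lemma sum_character_mul_conj {G : Type*} [CommGroup G] [Fintype G] (φ ψ : G →* ℂˣ)
    (h : φ ≠ ψ) : ∑ g : G, (φ g : ℂ) * (starRingEnd ℂ) (ψ g : ℂ) = 0 := by
  have hne : (Units.coeHom ℂ).comp (φ * ψ⁻¹) ≠ 1 := by
    intro hc
    apply h
    rw [← mul_inv_eq_one]
    ext g
    exact DFunLike.congr_fun hc g
  rw [← sum_hom_units_eq_zero _ hne]
  refine Finset.sum_congr rfl fun g _ => ?_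
  rw [← Complex.inv_eq_conj (norm_character_apply ψ g)]
  simp

/-- Parseval's identity for a sum of `k` distinct irreducible characters. -/
lemma sum_sq_norm_sum_characters {G : Type*} [CommGroup G] [Fintype G] {k : ℕ}
    (lam : Fin k → (G →* ℂˣ)) (hinj : Function.Injective lam) :
    ∑ g : G, ‖∑ i, (lam i g : ℂ)‖ ^ 2 = (k : ℝ) * Fintype.card G := by
  have hdiag : ∀ i j, ∑ g : G, (lam i g : ℂ) * (starRingEnd ℂ) (lam j g : ℂ)
      = if i = j then (Fintype.card G : ℂ) else 0 := by
    intro i j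
    split_ifs with hij
    · subst hij
      simp [Complex.mul_conj', norm_character_apply]
    · exact sum_character_mul_conj _ _ (hinj.ne hij)
  have key : ((∑ g : G, ‖∑ i, (lam i g : ℂ)‖ ^ 2 : ℝ) : ℂ) = (k : ℂ) * Fintype.card G := by
    push_cast
    simp_rw [← Complex.mul_conj', map_sum, Finset.sum_mul_sum]
    rw [Finset.sum_comm]
    simp_rw [Finset.sum_comm (s := (Finset.univ : Finset G)), hdiag]
    simp
  exact_mod_cast key

theorem stmt_9 {G : Type*} [CommGroup G] [Fintype G] [DecidableEq G]
    (χ : G → ℂ)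
    -- values on nonidentity elements are sums of at most two roots of unity
    (hval : ∀ x : G, x ≠ 1 → IsSumAtMostTwoRootsOfUnity (χ x))
    (k : ℕ) (a ε : ℤ) (hε : ε = 1 ∨ ε = -1)
    (lam : Fin k → (G →* ℂˣ)) (hinj : Function.Injective lam)
    -- χ = a·ρ_G + ε·(λ₁ + ⋯ + λ_k)
    (hform : ∀ g : G, χ g = (a : ℂ) * (if g = 1 then (Fintype.card G : ℂ) else 0)
        + (ε : ℂ) * ∑ i : Fin k, (lam i g : ℂ)) :
    (k = 6 → Fintype.card G ≤ 16) ∧ (k = 7 → Fintype.card G ≤ 15) := by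
  have hbound : ∀ x : G, x ≠ 1 → ‖∑ i, (lam i x : ℂ)‖ ^ 2 ≤ 4 := by
    intro x hx
    have h2 := norm_le_two_of_isSumAtMostTwoRootsOfUnity (hval x hx)
    have hχ : ‖χ x‖ = ‖∑ i, (lam i x : ℂ)‖ := by
      rw [hform x, if_neg hx]
      rcases hε with rfl | rfl <;> simp
    rw [hχ] at h2
    nlinarith [norm_nonneg (∑ i, (lam i x : ℂ))]
  have hle : (k : ℝ) * Fintype.card G ≤ k ^ 2 + 4 * ((Fintype.card G : ℝ) - 1) := by
    rw [← sum_sq_norm_sum_characters lam hinj, ← Finset.add_sum_erase _ _ (Finset.mem_univ (1 : G))]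
    have hrest := Finset.sum_le_card_nsmul (Finset.univ.erase (1 : G))
      (fun x => ‖∑ i, (lam i x : ℂ)‖ ^ 2) 4 fun x hx => hbound x (Finset.ne_of_mem_erase hx)
    rw [Finset.card_erase_of_mem (Finset.mem_univ _), Finset.card_univ, nsmul_eq_mul,
      Nat.cast_sub Fintype.card_pos] at hrest
    have hone : ‖∑ i, (lam i 1 : ℂ)‖ ^ 2 = (k : ℝ) ^ 2 := by simp
    push_cast at hrest
    linarith
  constructor
  · rintro rfl
    have : (Fintype.card G : ℝ) ≤ 16 := by push_cast at hle; linarith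
    exact_mod_cast this
  · rintro rfl
    have : (Fintype.card G : ℝ) ≤ 15 := by push_cast at hle; linarith
    exact_mod_cast this
end

section
/- Let G be a finite group and let χ be a generalized character of G, with (integer) virtual degree d = χ(1), such that χ(x) is a sum of at most two roots of unity for every nonidentity x ∈ G. Let p and q be primes dividing |G| with p ≥ 5 and q ≥ 5, and suppose G contains an element of order p·q. If a, b ∈ {−2, −1, 0, 1, 2} satisfy d ≡ a (mod p) and d ≡ b (mod q), then a = b. (Consequently, for each i ∈ {−2,…,2} the set π_i of primes p ≥ 5 dividing |G| with d ≡ i (mod p) induces a union of connected components of the subgraph of the prime graph of G on the primes ≥ 5.) -/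
open Polynomial

/-! ### Character values on a cyclic subgroup -/

/-- The traces of the powers of an operator of finite order are the values of one integer
polynomial at the powers of `ω`: its coefficients are the multiplicities of the eigenvalues `ω ^ j`. -/
theorem exists_poly_trace {V : Type*} [AddCommGroup V] [Module ℂ V] [FiniteDimensional ℂ V]
    (A : Module.End ℂ V) (n : ℕ) (hn : 0 < n) (hA : A ^ n = 1) (ω : ℂ)
    (hω : IsPrimitiveRoot ω n) :
    ∃ f : ℤ[X], ∀ k : ℕ, LinearMap.trace ℂ V (A ^ k) = aeval (ω ^ k) f := by
  have hn0 : (n : ℂ) ≠ 0 := by exact_mod_cast hn.ne'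
  have hω0 : ω ≠ 0 := hω.ne_zero hn.ne'
  -- `P j` is the projection onto the `ω ^ j`-eigenspace, an average of the powers of `B j`.
  let B : ℕ → Module.End ℂ V := fun j => (ω ^ j)⁻¹ • A
  let P : ℕ → Module.End ℂ V := fun j => (n : ℂ)⁻¹ • ∑ i ∈ Finset.range n, B j ^ i
  have hB : ∀ j, B j ^ n = 1 := fun j => by
    simp only [B, _root_.smul_pow, hA, inv_pow]
    rw [← pow_mul, mul_comm, pow_mul, hω.pow_eq_one]; simp
  have hBP : ∀ j, B j * P j = P j := fun j => by
    have := mul_geom_sum (B j) n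
    rw [hB, sub_self, sub_mul, one_mul, sub_eq_zero] at this
    simp only [P, mul_smul_comm, this]
  have hAP : ∀ j, A * P j = ω ^ j • P j := fun j => by
    conv_rhs => rw [← hBP j]
    simp only [B, smul_mul_assoc, smul_smul]
    rw [mul_inv_cancel₀ (pow_ne_zero _ hω0), one_smul]
  have hAkP : ∀ j k, A ^ k * P j = (ω ^ k) ^ j • P j := fun j k => by
    induction k with
    | zero => simp
    | succ k ih =>
      rw [pow_succ, mul_assoc, hAP, mul_smul_comm, ih, smul_smul, ← mul_pow, pow_succ, mul_comm ω]
  have hBkP : ∀ j k, B j ^ k * P j = P j := fun j k => by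
    induction k with
    | zero => simp
    | succ k ih => rw [pow_succ, mul_assoc, hBP, ih]
  have hidem : ∀ j, IsIdempotentElem (P j) := fun j => by
    unfold IsIdempotentElem
    conv_lhs => enter [1]; simp only [P]
    rw [smul_mul_assoc, Finset.sum_mul, Finset.sum_congr rfl fun i _ => hBkP j i]
    simp [← Nat.cast_smul_eq_nsmul ℂ, smul_smul, hn0]
  have hsum : ∑ j ∈ Finset.range n, P j = 1 := by
    simp only [P, ← Finset.smul_sum]
    rw [Finset.sum_comm]
    rw [Finset.sum_eq_single 0]
    · simp [← Nat.cast_smul_eq_nsmul ℂ, smul_smul, hn0]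
    · intro i hi hi0
      simp only [B, _root_.smul_pow, ← Finset.sum_smul]
      have : ∑ j ∈ Finset.range n, (ω ^ j)⁻¹ ^ i = 0 := by
        have h1 : (ω⁻¹) ^ i ≠ 1 :=
          hω.inv.pow_ne_one_of_pos_of_lt hi0 (Finset.mem_range.1 hi)
        have h2 := mul_geom_sum ((ω⁻¹) ^ i) n
        rw [← pow_mul, mul_comm i, pow_mul, hω.inv.pow_eq_one, one_pow,
          sub_self] at h2
        rw [← (mul_eq_zero.1 h2).resolve_left (sub_ne_zero.2 h1)]
        refine Finset.sum_congr rfl fun j _ => ?_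
        rw [← inv_pow, ← pow_mul, ← pow_mul, mul_comm]
      rw [this, zero_smul]
    · intro h; simp at h; omega
  choose r hr using fun j => (⟨_, (LinearMap.IsIdempotentElem.isProj_range _ (hidem j)).trace⟩ :
    ∃ r : ℕ, LinearMap.trace ℂ V (P j) = r)
  refine ⟨∑ j ∈ Finset.range n, C (r j : ℤ) * X ^ j, fun k => ?_⟩
  rw [← mul_one (A ^ k), ← hsum, Finset.mul_sum, map_sum, map_sum]
  refine Finset.sum_congr rfl fun j _ => ?_
  rw [hAkP, map_smul, hr]
  simp [mul_comm]

theorem exists_poly_genChar {G : Type} [Group G] {χ : G → ℂ}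
    (hχ : IsGenChar G χ) (g : G) (n : ℕ) (hn : 0 < n) (hg : g ^ n = 1) (ω : ℂ) (hω : IsPrimitiveRoot ω n) :
    ∃ f : ℤ[X], ∀ k : ℕ, χ (g ^ k) = aeval (ω ^ k) f := by
  obtain ⟨V, W, h⟩ := hχ
  have key : ∀ V : FDRep ℂ G, ∃ f : ℤ[X], ∀ k : ℕ, V.character (g ^ k) = aeval (ω ^ k) f := by
    intro V
    obtain ⟨f, hf⟩ := exists_poly_trace (V.ρ g) n hn (by rw [← map_pow, hg, map_one]) ω hω
    refine ⟨f, fun k => ?_⟩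
    rw [← hf k, ← map_pow]
    rfl
  obtain ⟨f, hf⟩ := key V
  obtain ⟨f', hf'⟩ := key W
  exact ⟨f - f', fun k => by rw [h, hf, hf', map_sub]⟩

/-! ### Galois conjugation of cyclotomic relations -/

theorem cyclotomic_dvd_of_aeval {M : ℕ} (hM : 0 < M) {ζ : ℂ} (hζ : IsPrimitiveRoot ζ M)
    {F : ℤ[X]} (hF : aeval ζ F = 0) : cyclotomic M ℤ ∣ F := by
  rw [cyclotomic_eq_minpoly hζ hM]
  exact minpoly.isIntegrallyClosed_dvd (hζ.isIntegral hM) hF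

/-- Galois conjugation `ζ ↦ ζ ^ t` of an integral polynomial relation satisfied by `ζ`. -/
theorem aeval_pow_eq_zero {M : ℕ} (hM : 0 < M) {ζ : ℂ} (hζ : IsPrimitiveRoot ζ M)
    {F : ℤ[X]} (hF : aeval ζ F = 0) {t : ℕ} (ht : t.Coprime M) : aeval (ζ ^ t) F = 0 := by
  obtain ⟨g, rfl⟩ := cyclotomic_dvd_of_aeval hM hζ hF
  rw [map_mul]
  have : aeval (ζ ^ t) (cyclotomic M ℤ) = 0 := by
    rw [cyclotomic_eq_minpoly (hζ.pow_of_coprime t ht) hM]; exact minpoly.aeval _ _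
  rw [this, zero_mul]

/-- Galois conjugation `ζ ↦ ζ ^ t` with `t ≡ 1 mod m` fixes `ω`, hence fixes every integral
combination of two `M`-th roots of unity that lies in `ℤ[ω]`. -/
theorem conj_sum {m M : ℕ} {ω u v : ℂ} {f : ℤ[X]} {c₁ c₂ : ℤ} (hω : IsPrimitiveRoot ω m)
    (hM : 0 < M) (hmM : m ∣ M) (hu : u ^ M = 1) (hv : v ^ M = 1)
    (hf : aeval ω f = c₁ * u + c₂ * v) {t : ℕ} (ht : t.Coprime M) (htm : t ≡ 1 [MOD m]) :
    c₁ * u ^ t + c₂ * v ^ t = aeval ω f := by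
  have hζ := Complex.isPrimitiveRoot_exp M hM.ne'
  set ζ := Complex.exp (2 * Real.pi * Complex.I / M)
  have : NeZero M := ⟨hM.ne'⟩
  have hωt : ω ^ t = ω := by
    conv_rhs => rw [← pow_one ω]
    exact pow_eq_pow_of_modEq htm hω.pow_eq_one
  have hωM : ω ^ M = 1 := by
    obtain ⟨k, rfl⟩ := hmM
    rw [pow_mul, hω.pow_eq_one, one_pow]
  obtain ⟨a, -, ha⟩ := hζ.eq_pow_of_pow_eq_one hωM
  obtain ⟨b, -, hb⟩ := hζ.eq_pow_of_pow_eq_one hu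
  obtain ⟨c, -, hc⟩ := hζ.eq_pow_of_pow_eq_one hv
  have h := aeval_pow_eq_zero hM hζ
    (F := f.comp (X ^ a) - C c₁ * X ^ b - C c₂ * X ^ c)
    (by simp [aeval_comp, ha, hb, hc, hf]) ht
  have e : ∀ n, (ζ ^ t) ^ n = (ζ ^ n) ^ t := fun n => by rw [← pow_mul, mul_comm, pow_mul]
  simp only [aeval_comp, map_sub, map_mul, map_pow, aeval_X, aeval_C, e, ha, hb, hc, hωt,
    algebraMap_int_eq, Int.coe_castRingHom] at h
  linear_combination -h

/-- Two complex numbers of norm one are determined, up to order, by their sum when it is nonzero: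
conjugating shows that the sum determines the product. -/
theorem unit_sum_unique {u v u' v' : ℂ} (hu : ‖u‖ = 1) (hv : ‖v‖ = 1) (hu' : ‖u'‖ = 1)
    (hv' : ‖v'‖ = 1) (h : u + v = u' + v') (h0 : u + v ≠ 0) :
    (u' = u ∧ v' = v) ∨ (u' = v ∧ v' = u) := by
  have hc : ∀ {z : ℂ}, ‖z‖ = 1 → z * (starRingEnd ℂ) z = 1 := fun {z} hz => by
    rw [Complex.mul_conj, Complex.normSq_eq_norm_sq, hz]; simp
  have h1 := congrArg (starRingEnd ℂ) h
  simp only [map_add] at h1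
  have hprod : u * v = u' * v' := by
    apply mul_right_cancel₀ (b := (starRingEnd ℂ) u + (starRingEnd ℂ) v)
    · rw [← map_add]; exact (_root_.map_ne_zero _).2 h0
    · have : u * v * ((starRingEnd ℂ) u + (starRingEnd ℂ) v) = u + v := by
        linear_combination v * hc hu + u * hc hv
      rw [this, h1, h]
      linear_combination -v' * hc hu' - u' * hc hv'
  have : (u' - u) * (u' - v) = 0 := by linear_combination hprod - u' * h
  rcases mul_eq_zero.1 this with h2 | h2
  · left; constructor
    · linear_combination h2
    · linear_combination -h - h2
  · right; constructor
    · linear_combination h2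
    · linear_combination -h - h2

/-! ### Normal form of sums of two roots of unity in a cyclotomic ring of odd conductor -/

theorem exists_dvd_pow_mul (m n : ℕ) (hn : 0 < n) :
    ∃ r N : ℕ, 0 < N ∧ m.Coprime N ∧ n ∣ m ^ r * N := by
  induction n using Nat.strong_induction_on with
  | _ n ih =>
    by_cases h : m.Coprime n
    · exact ⟨0, n, hn, h, by simp⟩
    · have hg : 1 < m.gcd n := by
        have := Nat.gcd_pos_of_pos_right m hn
        have h' : m.gcd n ≠ 1 := h
        omega
      obtain ⟨k, hk⟩ := Nat.gcd_dvd_right m n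
      have hk0 : 0 < k := Nat.pos_of_ne_zero (by rintro rfl; simp at hk; omega)
      obtain ⟨r, N, hN, hc, hd⟩ := ih k (by rw [hk]; nlinarith) hk0
      refine ⟨r + 1, N, hN, hc, ?_⟩
      rw [hk, pow_succ', mul_assoc]
      exact mul_dvd_mul (Nat.gcd_dvd_left m n) hd

/-- Decomposition of a root of unity into its parts of coprime orders. -/
theorem exists_split {A N : ℕ} (h : A.Coprime N) {u : ℂ} (hu : u ^ (A * N) = 1) :
    ∃ α w : ℂ, u = α * w ∧ α ^ A = 1 ∧ w ^ N = 1 := by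
  obtain ⟨e, he⟩ := Nat.chineseRemainder h 1 0
  obtain ⟨e', he'⟩ := Nat.chineseRemainder h 0 1
  refine ⟨u ^ e, u ^ e', ?_, ?_, ?_⟩
  · rw [← pow_add]
    conv_lhs => rw [← pow_one u]
    refine pow_eq_pow_of_modEq (Nat.ModEq.symm ?_) hu
    exact (Nat.modEq_and_modEq_iff_modEq_mul h).1 ⟨he.1.add he'.1, he.2.add he'.2⟩
  · obtain ⟨k, hk⟩ := (Nat.modEq_zero_iff_dvd.1 he.2)
    rw [← pow_mul, hk, show N * k * A = A * N * k by ring, pow_mul, hu, one_pow]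
  · obtain ⟨k, hk⟩ := (Nat.modEq_zero_iff_dvd.1 he'.1)
    rw [← pow_mul, hk, show A * k * N = A * N * k by ring, pow_mul, hu, one_pow]

theorem eq_one_of_pow_coprime {A N : ℕ} (h : A.Coprime N) {u : ℂ} (hA : u ^ A = 1)
    (hN : u ^ N = 1) : u = 1 := by
  have := pow_gcd_eq_one.2 ⟨hA, hN⟩
  rwa [h, pow_one] at this

/-- If `w + w⁻¹` is fixed by all conjugations of the primitive `k`-th root `w`, it is one of
`-2, …, 2`. One conjugation is enough: `s = 2`, `k / 2 + 1` or `k / 2 + 2` according to `k` being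
odd, divisible by `4`, or twice an odd number; it gives a polynomial equation for `w + w⁻¹`. -/
theorem add_inv_mem {w : ℂ} {k : ℕ} (hk : 0 < k) (hw : IsPrimitiveRoot w k)
    (h : ∀ s : ℕ, s.Coprime k → w ^ s + (w⁻¹) ^ s = w + w⁻¹) :
    ∃ c : ℤ, |c| ≤ 2 ∧ w + w⁻¹ = c := by
  have hw0 : w ≠ 0 := hw.ne_zero hk.ne'
  have hww : w * w⁻¹ = 1 := mul_inv_cancel₀ hw0
  have hhalf : ∀ j, k = 2 * j → w ^ j = -1 ∧ (w⁻¹) ^ j = -1 := by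
    rintro j rfl
    have h1 : w ^ j = -1 := by
      have h2 : (w ^ j) ^ 2 = 1 := by rw [← pow_mul, mul_comm, hw.pow_eq_one]
      exact (sq_eq_sq_iff_eq_or_eq_neg.1 (h2.trans (one_pow 2).symm)).resolve_left
        (hw.pow_ne_one_of_pos_of_lt (by omega) (by omega))
    exact ⟨h1, by rw [inv_pow, h1]; norm_num⟩
  rcases Nat.even_or_odd' k with ⟨j, hj | hj⟩
  · obtain ⟨h1, h2⟩ := hhalf j hj
    rcases Nat.even_or_odd j with hje | hjo
    · have := h (j + 1) (by
        rw [hj]; exact Nat.Coprime.mul_right (hje.add_one).coprime_two_right (by simp))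
      rw [pow_succ, pow_succ, h1, h2] at this
      exact ⟨0, by norm_num, by push_cast; linear_combination -this / 2⟩
    · have := h (j + 2) (by
        rw [hj]; refine Nat.Coprime.mul_right (hjo.add_even even_two).coprime_two_right ?_
        rw [Nat.coprime_self_add_left]
        exact hjo.coprime_two_left)
      rw [pow_add, pow_add, h1, h2] at this
      have h3 : (w + w⁻¹ - 1) * (w + w⁻¹ + 2) = 0 := by linear_combination -this + 2 * hww
      rcases mul_eq_zero.1 h3 with h4 | h4
      · exact ⟨1, by norm_num, by push_cast; linear_combination h4⟩
      · exact ⟨-2, by norm_num, by push_cast; linear_combination h4⟩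
  · have := h 2 (by rw [hj]; simp)
    have h3 : (w + w⁻¹ - 2) * (w + w⁻¹ + 1) = 0 := by linear_combination this + 2 * hww
    rcases mul_eq_zero.1 h3 with h4 | h4
    · exact ⟨2, by norm_num, by push_cast; linear_combination h4⟩
    · exact ⟨-1, by norm_num, by push_cast; linear_combination h4⟩

/-- Removal of the parts of `u`, `v` of order prime to `m`. Conjugation inverting these parts and
fixing the others either fixes `u` and `v`, so the parts are `±1`, or swaps them, so
`u + v = α (w + w⁻¹)` and `add_inv_mem` applies. -/
theorem normal_form_step {m : ℕ} (hm : 0 < m) {ω u v : ℂ} {f : ℤ[X]}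
    (hω : IsPrimitiveRoot ω m) {n : ℕ} (hn : 0 < n) (hu : u ^ n = 1) (hv : v ^ n = 1)
    (hf : aeval ω f = u + v) (h0 : u + v ≠ 0) :
    ∃ (r : ℕ) (α β : ℂ), 0 < r ∧ α ^ m ^ r = 1 ∧ β ^ m ^ r = 1 ∧
      ((∃ c₁ c₂ : ℤ, |c₁| = 1 ∧ |c₂| = 1 ∧ u + v = c₁ * α + c₂ * β) ∨
        ∃ c : ℤ, |c| ≤ 2 ∧ u + v = c * α) := by
  obtain ⟨r', N, hN, hmN, hdvd⟩ := exists_dvd_pow_mul m n hn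
  obtain ⟨r, rfl, hr⟩ : ∃ r, r = r' + 1 ∧ 0 < r := ⟨_, rfl, by omega⟩
  generalize hrr : r' + 1 = r at *
  replace hdvd : n ∣ m ^ r * N :=
    hdvd.trans (mul_dvd_mul_right (pow_dvd_pow m (by omega)) N)
  have hcop : (m ^ r).Coprime N := Nat.Coprime.pow_left r hmN
  have hroot : ∀ {z : ℂ}, z ^ n = 1 → z ^ (m ^ r * N) = 1 := fun {z} hz => by
    obtain ⟨k, hk⟩ := hdvd
    rw [hk, pow_mul, hz, one_pow]
  have hmr : m ∣ m ^ r := dvd_pow_self m hr.ne'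
  obtain ⟨α, w, rfl, hα, hw⟩ := exists_split hcop (hroot hu)
  obtain ⟨β, x, rfl, hβ, hx⟩ := exists_split hcop (hroot hv)
  refine ⟨r, α, β, hr, hα, hβ, ?_⟩
  have hα0 : α ≠ 0 := by rintro rfl; simp [hm.ne'] at hα
  have hw0 : w ≠ 0 := by rintro rfl; simp [hN.ne'] at hw
  have hx0 : x ≠ 0 := by rintro rfl; simp [hN.ne'] at hx
  have hMr : 0 < m ^ r := pow_pos hm r
  have n1 : ∀ {z : ℂ} {k : ℕ}, 0 < k → z ^ k = 1 → ‖z‖ = 1 := fun {z k} hk hz =>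
    Complex.norm_eq_one_of_pow_eq_one hz hk.ne'
  -- Conjugation by `t ≡ 1 mod m ^ r`, `t ≡ -1 mod N`.
  obtain ⟨t, ht1, ht2⟩ := Nat.chineseRemainder hcop 1 (N - 1)
  have hinv : ∀ {z : ℂ}, z ^ N = 1 → z ^ t = z⁻¹ := fun {z} hz => by
    rw [pow_eq_pow_of_modEq ht2 hz]
    apply eq_inv_of_mul_eq_one_left
    rw [← pow_succ, Nat.sub_add_cancel hN, hz]
  have hfix : ∀ {z : ℂ}, z ^ m ^ r = 1 → z ^ t = z := fun {z} hz => by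
    rw [pow_eq_pow_of_modEq ht1 hz, pow_one]
  have htc : t.Coprime (m ^ r * N) := by
    refine Nat.Coprime.mul_right ?_ ?_
    · have := ht1.gcd_eq
      simpa [Nat.Coprime] using this
    · have := ht2.gcd_eq
      rw [Nat.Coprime, this, Nat.gcd_comm]
      simpa using (Nat.coprime_self_sub_right hN).2 (Nat.coprime_one_right N)
  have h1 := conj_sum (c₁ := 1) (c₂ := 1) hω (Nat.mul_pos hMr hN) (hmr.mul_right N) (hroot hu)
    (hroot hv) (by simpa using hf) htc (ht1.of_dvd hmr)
  rw [hf, mul_pow, mul_pow, hfix hα, hfix hβ, hinv hw, hinv hx] at h1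
  simp only [Int.cast_one, one_mul] at h1
  rcases unit_sum_unique (u' := α * w⁻¹) (v' := β * x⁻¹) (n1 hn hu) (n1 hn hv)
    (by simp [n1 hMr hα, n1 hN hw]) (by simp [n1 hMr hβ, n1 hN hx]) h1.symm h0 with
    ⟨h2, h3⟩ | ⟨h2, h3⟩
  · left
    have hβ0 : β ≠ 0 := by rintro rfl; simp [hm.ne'] at hβ
    have sgn : ∀ {y : ℂ}, y ≠ 0 → y⁻¹ = y → ∃ c : ℤ, |c| = 1 ∧ y = c := fun {y} hy h => by
      have : y * y = 1 := by
        conv_lhs => rw [← h]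
        rw [h]; conv_lhs => enter [1]; rw [← h]
        exact inv_mul_cancel₀ hy
      rcases mul_self_eq_one_iff.1 this with h | h
      · exact ⟨1, by norm_num, by simp [h]⟩
      · exact ⟨-1, by norm_num, by simp [h]⟩
    obtain ⟨c₁, hc₁, e₁⟩ := sgn hw0 (mul_left_cancel₀ hα0 h2)
    obtain ⟨c₂, hc₂, e₂⟩ := sgn hx0 (mul_left_cancel₀ hβ0 h3)
    exact ⟨c₁, c₂, hc₁, hc₂, by rw [e₁, e₂]; ring⟩
  · right
    -- `α / β = w * x` has order dividing both `m ^ r` and `N`.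
    have hβ0 : β ≠ 0 := by rintro rfl; simp [hm.ne'] at hβ
    have e : α / β = w * x := by field_simp at h2 ⊢; linear_combination h2
    have hwx : w * x = 1 := eq_one_of_pow_coprime hcop
      (by rw [← e, div_pow, hα, hβ, div_one]) (by rw [mul_pow, hw, hx, one_mul])
    have hαβ : α = β := by rw [hwx] at e; field_simp at e; exact e
    have hxw : x = w⁻¹ := eq_inv_of_mul_eq_one_right hwx
    subst hαβ hxw
    have hk := orderOf_pos_iff.2 (isOfFinOrder_iff_pow_eq_one.2 ⟨N, hN, hw⟩)
    have hkN : orderOf w ∣ N := orderOf_dvd_of_pow_eq_one hw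
    have hck : (m ^ r).Coprime (orderOf w) := hcop.coprime_dvd_right hkN
    obtain ⟨c, hc, e⟩ := add_inv_mem hk (IsPrimitiveRoot.orderOf w) (by
      intro s hs
      obtain ⟨t, ht1, ht2⟩ := Nat.chineseRemainder hck 1 s
      have htc : t.Coprime (m ^ r * orderOf w) := by
        refine Nat.Coprime.mul_right ?_ ?_
        · have := ht1.gcd_eq
          simpa [Nat.Coprime] using this
        · have := ht2.gcd_eq
          rw [Nat.Coprime, this]; exact hs
      have hα' : α ^ (m ^ r * orderOf w) = 1 := by rw [pow_mul, hα, one_pow]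
      have hw' : w ^ (m ^ r * orderOf w) = 1 := by
        rw [mul_comm, pow_mul, pow_orderOf_eq_one, one_pow]
      have h1 := conj_sum (c₁ := 1) (c₂ := 1) (u := α * w) (v := α * w⁻¹) hω
        (Nat.mul_pos hMr hk) (hmr.mul_right _) (by rw [mul_pow, hα', hw', one_mul])
        (by rw [mul_pow, inv_pow, hα', hw', inv_one, one_mul]) (by simpa using hf) htc
        (ht1.of_dvd hmr)
      have hα2 : α ^ t = α := by rw [pow_eq_pow_of_modEq ht1 hα, pow_one]
      have hw2 : w ^ t = w ^ s := pow_eq_pow_of_modEq ht2 (pow_orderOf_eq_one w)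
      rw [hf, mul_pow, mul_pow, inv_pow, hα2, hw2] at h1
      apply mul_left_cancel₀ hα0
      rw [inv_pow]
      push_cast at h1
      linear_combination h1)
    exact ⟨c, hc, by rw [← mul_add, e, mul_comm]⟩

/-- An element of `ℤ[ω]`, `ω` a primitive root of unity of odd order `m`, that is a sum of two
roots of unity is an integral combination of two powers of `ω` with coefficients of total absolute
value at most `2`. After `normal_form_step` the roots have order dividing `m ^ r`; conjugation by
`t = 1 + m` shows that they are `m`-th roots of unity. -/
theorem normal_form {m : ℕ} (hm : Odd m) {ω : ℂ} {f : ℤ[X]}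
    (hω : IsPrimitiveRoot ω m) {u v : ℂ} {n : ℕ} (hn : 0 < n) (hu : u ^ n = 1) (hv : v ^ n = 1)
    (hf : aeval ω f = u + v) :
    ∃ (c₁ c₂ : ℤ) (i j : ℕ), |c₁| + |c₂| ≤ 2 ∧ aeval ω f = c₁ * ω ^ i + c₂ * ω ^ j := by
  by_cases h0 : u + v = 0
  · exact ⟨0, 0, 0, 0, by norm_num, by simp [hf, h0]⟩
  have hm0 : 0 < m := hm.pos
  have : NeZero m := ⟨hm0.ne'⟩
  obtain ⟨r, α, β, hr, hα, hβ, h⟩ := normal_form_step hm0 hω hn hu hv hf h0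
  have hMr : 0 < m ^ r := pow_pos hm0 r
  have hmr : m ∣ m ^ r := dvd_pow_self m hr.ne'
  have hα0 : α ≠ 0 := by rintro rfl; simp [hm0.ne'] at hα
  have htc : (1 + m).Coprime (m ^ r) := Nat.Coprime.pow_right r (by simp)
  have htm : 1 + m ≡ 1 [MOD m] := by simp [Nat.ModEq]
  have hpow : ∀ {y : ℂ}, y ≠ 0 → y ^ (1 + m) = y → y ^ m = 1 := fun {y} hy h => by
    rw [pow_add, pow_one] at h
    exact mul_left_cancel₀ hy (h.trans (mul_one y).symm)
  rcases h with ⟨c₁, c₂, hc₁, hc₂, h⟩ | ⟨c, hc, h⟩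
  · have hβ0 : β ≠ 0 := by rintro rfl; simp [hm0.ne'] at hβ
    suffices α ^ m = 1 ∧ β ^ m = 1 by
      obtain ⟨i, -, hi⟩ := hω.eq_pow_of_pow_eq_one this.1
      obtain ⟨j, -, hj⟩ := hω.eq_pow_of_pow_eq_one this.2
      exact ⟨c₁, c₂, i, j, by omega, by rw [hi, hj, hf, h]⟩
    have h1 := conj_sum (c₁ := c₁) (c₂ := c₂) hω hMr hmr hα hβ (hf.trans h) htc htm
    rw [hf, h] at h1
    have nα := Complex.norm_eq_one_of_pow_eq_one hα hMr.ne'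
    have nβ := Complex.norm_eq_one_of_pow_eq_one hβ hMr.ne'
    have nc : ∀ {c : ℤ}, |c| = 1 → ‖(c : ℂ)‖ = 1 := fun {c} hc => by
      rw [Complex.norm_intCast]; exact_mod_cast hc
    have c0 : ∀ {c : ℤ}, |c| = 1 → (c : ℂ) ≠ 0 := fun {c} hc => by
      rintro h; rw [Int.cast_eq_zero] at h; subst h; simp at hc
    rcases unit_sum_unique (u' := c₁ * α ^ (1 + m)) (v' := c₂ * β ^ (1 + m))
      (by rw [norm_mul, nα, nc hc₁, mul_one]) (by rw [norm_mul, nβ, nc hc₂, mul_one])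
      (by rw [norm_mul, norm_pow, nα, nc hc₁, one_pow, mul_one])
      (by rw [norm_mul, norm_pow, nβ, nc hc₂, one_pow, mul_one]) h1.symm (h ▸ h0) with
      ⟨h2, h3⟩ | ⟨h2, h3⟩
    · exact ⟨hpow hα0 (mul_left_cancel₀ (c0 hc₁) h2), hpow hβ0 (mul_left_cancel₀ (c0 hc₂) h3)⟩
    · have hodd : Odd (m ^ r) := hm.pow
      -- Raising to the odd power `m ^ r` kills `α`, `β` and preserves the signs.
      have hcc : c₁ = c₂ := by
        have h4 := congrArg (· ^ m ^ r) h2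
        simp only [mul_pow] at h4
        rw [← pow_mul, mul_comm, mul_comm (1 + m), pow_mul, hα, hβ, one_pow] at h4
        have h5 : c₁ ^ m ^ r = c₂ ^ m ^ r := by
          have : (c₁ : ℂ) ^ m ^ r = c₂ ^ m ^ r := by linear_combination h4
          exact_mod_cast this
        exact hodd.strictMono_pow.injective h5
      subst hcc
      have hβα := mul_left_cancel₀ (c0 hc₁) h2
      have hαβ := mul_left_cancel₀ (c0 hc₁) h3
      have h6 : α ^ (m * (m + 2)) = 1 := by
        rw [← hβα, ← pow_mul] at hαβ
        apply mul_left_cancel₀ hα0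
        rw [← pow_succ', mul_one]
        convert hαβ using 2; ring
      have h7 : α ^ m = 1 := by
        apply eq_one_of_pow_coprime (A := m + 2) (N := m ^ r)
        · apply Nat.Coprime.pow_right
          rw [Nat.coprime_self_add_left]; exact hm.coprime_two_left
        · rw [← pow_mul, h6]
        · rw [← pow_mul, mul_comm, pow_mul, hα, one_pow]
      refine ⟨h7, ?_⟩
      rw [← hβα, ← pow_mul, mul_comm, pow_mul, h7, one_pow]
  · have h1 := conj_sum (c₁ := c) (c₂ := 0) hω hMr hmr hα hα (by rw [hf, h]; simp) htc htm
    have hc0 : (c : ℂ) ≠ 0 := by rintro e; rw [e] at h; simp [h] at h0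
    rw [hf, h] at h1
    have h2 : α ^ (1 + m) = α := mul_left_cancel₀ hc0 (by simpa using h1)
    obtain ⟨i, -, hi⟩ := hω.eq_pow_of_pow_eq_one (hpow hα0 h2)
    exact ⟨c, 0, i, 0, by simpa using hc, by rw [hi, hf, h]; simp⟩

/-! ### Comparison of sparse polynomials modulo cyclotomic polynomials -/

/-- A combination of at most four monomials divisible by `Φ_q`, `q ≥ 5`, vanishes at `1`: reducing
exponents modulo `q` turns it into a scalar multiple of `1 + X + ⋯ + X ^ (q - 1)` with a vanishing
coefficient. -/
theorem sum_eq_zero_of_cyclotomic_dvd {F : Type*} [Field F] {q : ℕ} (hq : q.Prime) (hq5 : 5 ≤ q)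
    (a : Fin 4 → F) (e : Fin 4 → ℕ) (h : cyclotomic q F ∣ ∑ l, C (a l) * X ^ e l) :
    ∑ l, a l = 0 := by
  have : Fact q.Prime := ⟨hq⟩
  have hq1 : cyclotomic q F ∣ X ^ q - 1 := cyclotomic.dvd_X_pow_sub_one q F
  have hred : ∀ n : ℕ, cyclotomic q F ∣ X ^ n - X ^ (n % q) := fun n => by
    have h1 : (X ^ n - X ^ (n % q) : F[X]) = X ^ (n % q) * ((X ^ q) ^ (n / q) - 1) := by
      rw [mul_sub, mul_one, ← pow_mul, ← pow_add, Nat.mod_add_div]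
    rw [h1]
    refine Dvd.dvd.mul_left (hq1.trans ?_) _
    simpa using sub_dvd_pow_sub_pow (X ^ q : F[X]) 1 (n / q)
  obtain ⟨g, hg⟩ : cyclotomic q F ∣ ∑ l, C (a l) * X ^ (e l % q) := by
    have h2 : cyclotomic q F ∣ ∑ l, C (a l) * (X ^ e l - X ^ (e l % q)) :=
      Finset.dvd_sum fun l _ => (hred (e l)).mul_left _
    have := dvd_sub h h2
    simpa only [← Finset.sum_sub_distrib, ← mul_sub, sub_sub_cancel] using this
  have hdeg : (∑ l, C (a l) * X ^ (e l % q)).natDegree ≤ q - 1 := by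
    refine natDegree_sum_le_of_forall_le _ _ fun l _ => ?_
    have := Nat.mod_lt (e l) hq.pos
    exact (natDegree_C_mul_X_pow_le _ _).trans (by omega)
  have hg0 : g = 0 := by
    by_contra hne
    have h3 : g.natDegree = 0 := by
      rw [hg, natDegree_mul (cyclotomic_ne_zero q F) hne, natDegree_cyclotomic,
        Nat.totient_prime hq] at hdeg
      omega
    rw [eq_C_of_natDegree_eq_zero h3] at hg hne
    obtain ⟨j, hj, hje⟩ : ∃ j ∈ Finset.range q, j ∉ Finset.univ.image fun l => e l % q := by
      apply Finset.exists_mem_notMem_of_card_lt_card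
      refine Finset.card_image_le.trans_lt ?_
      simp; omega
    have h4 := congrArg (coeff · j) hg
    simp only [finsetSum_coeff, coeff_C_mul, coeff_mul_C, coeff_X_pow, cyclotomic_prime] at h4
    rw [Finset.sum_eq_zero, Finset.sum_eq_single j] at h4
    · simp at h4
      exact hne (by rw [← h4, C_0])
    · intro i _ hi; simp [hi.symm]
    · exact fun h => absurd hj h
    · intro l _
      rw [if_neg, mul_zero]
      rintro rfl
      exact hje (Finset.mem_image_of_mem _ (Finset.mem_univ l))
  rw [hg0, mul_zero] at hg
  simpa [eval_finsetSum] using congrArg (eval 1) hg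

/-- The residue `b` of `f(1)` modulo `q` is already visible in the sparse representative of `f`
modulo `Φ_{pq}`. -/
theorem eq_coeff_sum {p q : ℕ} (hp : p.Prime) (hq : q.Prime) (hp5 : 5 ≤ p) (hq5 : 5 ≤ q)
    (hpq : p ≠ q) {f : ℤ[X]} {c₁ c₂ c₃ c₄ : ℤ} {i j k l : ℕ}
    (h12 : |c₁| + |c₂| ≤ 2) (h34 : |c₃| + |c₄| ≤ 2)
    (hE : cyclotomic (q * p) ℤ ∣ f - (C c₁ * X ^ i + C c₂ * X ^ j))
    (hD : cyclotomic q ℤ ∣ f - (C c₃ * X ^ k + C c₄ * X ^ l))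
    {b : ℤ} (hb : |b| ≤ 2) (hdb : (q : ℤ) ∣ f.eval 1 - b) : b = c₁ + c₂ := by
  have : Fact p.Prime := ⟨hp⟩
  have : Fact q.Prime := ⟨hq⟩
  have hsmall : ∀ {n : ℕ} {x : ℤ}, 5 ≤ n → |x| ≤ 4 → (n : ℤ) ∣ x → x = 0 :=
    fun {n x} hn hx hd => Int.eq_zero_of_abs_lt_dvd hd (by omega)
  have h1 : b = c₃ + c₄ := by
    have h2 := eval_dvd (x := 1) hD
    rw [eval_one_cyclotomic_prime] at h2
    simp at h2
    have h3 := dvd_sub h2 hdb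
    have := hsmall hq5 (by grind) h3
    linarith
  have hE' := Polynomial.map_dvd (Int.castRingHom (ZMod p)) hE
  have hD' := Polynomial.map_dvd (Int.castRingHom (ZMod p)) hD
  rw [map_cyclotomic] at hE' hD'
  rw [cyclotomic_mul_prime_eq_pow_of_not_dvd (ZMod p)
    (fun h => hpq ((Nat.prime_dvd_prime_iff_eq hp hq).1 h))] at hE'
  have hE'' := (dvd_pow_self (cyclotomic q (ZMod p)) (by omega : p - 1 ≠ 0)).trans hE'
  have h4 := sum_eq_zero_of_cyclotomic_dvd (F := ZMod p) hq hq5 ![c₁, c₂, -c₃, -c₄] ![i, j, k, l]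
    (by
      convert dvd_sub hD' hE'' using 1
      simp [Fin.sum_univ_four]
      ring)
  have h5 : ((c₁ + c₂ - c₃ - c₄ : ℤ) : ZMod p) = 0 := by
    rw [← h4]; simp [Fin.sum_univ_four]; ring
  rw [ZMod.intCast_zmod_eq_zero_iff_dvd] at h5
  have := hsmall hp5 (by grind) h5
  linarith

/-- The three cases of `IsSumAtMostTwoRootsOfUnity` collapse to one, since `0 = 1 + (-1)` and
`z = -ρ z - ρ² z` for a primitive cube root of unity `ρ`. -/
theorem exists_two_roots {z : ℂ} (h : IsSumAtMostTwoRootsOfUnity z) :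
    ∃ (u v : ℂ) (n : ℕ), 0 < n ∧ u ^ n = 1 ∧ v ^ n = 1 ∧ z = u + v := by
  rcases h with rfl | ⟨n, hn, hz⟩ | ⟨u, v, ⟨n, hn, hu⟩, ⟨k, hk, hv⟩, rfl⟩
  · exact ⟨1, -1, 2, by norm_num, by norm_num, by norm_num, by norm_num⟩
  · have hρ := Complex.isPrimitiveRoot_exp 3 (by norm_num)
    set ρ := Complex.exp (2 * Real.pi * Complex.I / (3 : ℕ))
    have h3 : ρ ^ 3 = 1 := hρ.pow_eq_one
    have hs := hρ.geom_sum_eq_zero (by norm_num)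
    simp [Finset.sum_range_succ] at hs
    refine ⟨-ρ * z, -ρ ^ 2 * z, 6 * n, by omega, ?_, ?_, by linear_combination z * hs⟩
    · rw [mul_pow, mul_comm 6 n, pow_mul z, hz, one_pow, mul_one, mul_comm, pow_mul]
      rw [show (-ρ) ^ 6 = (ρ ^ 3) ^ 2 by ring, h3]; simp
    · rw [mul_pow, mul_comm 6 n, pow_mul z, hz, one_pow, mul_one, mul_comm, pow_mul]
      rw [show (-ρ ^ 2) ^ 6 = (ρ ^ 3) ^ 4 by ring, h3]; simp
  · exact ⟨u, v, n * k, Nat.mul_pos hn hk, by rw [pow_mul, hu, one_pow],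
      by rw [mul_comm, pow_mul, hv, one_pow], rfl⟩

theorem stmt_12 (G : Type) [Group G] [Fintype G]
    (χ : G → ℂ) (hχ : IsGenChar G χ)
    (d : ℤ) (hd : (d : ℂ) = χ 1)
    (hval : ∀ x : G, x ≠ 1 → IsSumAtMostTwoRootsOfUnity (χ x))
    (p q : ℕ) (hp : p.Prime) (hq : q.Prime)
    (hpG : p ∣ Fintype.card G) (hqG : q ∣ Fintype.card G)
    (hp5 : 5 ≤ p) (hq5 : 5 ≤ q)
    (helt : ∃ g : G, orderOf g = p * q)
    (a b : ℤ) (ha : a ∈ ({-2, -1, 0, 1, 2} : Set ℤ)) (hb : b ∈ ({-2, -1, 0, 1, 2} : Set ℤ))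
    (hda : (p : ℤ) ∣ d - a) (hdb : (q : ℤ) ∣ d - b) :
    a = b := by
  have hle : ∀ {x : ℤ}, x ∈ ({-2, -1, 0, 1, 2} : Set ℤ) → |x| ≤ 2 := fun {x} hx => by
    rcases hx with rfl | rfl | rfl | rfl | rfl <;> norm_num
  replace ha := hle ha
  replace hb := hle hb
  by_cases hpq : p = q
  · subst hpq
    have h1 := dvd_sub hdb hda
    have := Int.eq_zero_of_abs_lt_dvd h1 (by grind)
    linarith
  obtain ⟨g, hg⟩ := helt
  have hpos : 0 < p * q := Nat.mul_pos hp.pos hq.pos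
  have hω := Complex.isPrimitiveRoot_exp (p * q) hpos.ne'
  set ω := Complex.exp (2 * Real.pi * Complex.I / (p * q : ℕ))
  obtain ⟨f, hf⟩ := exists_poly_genChar hχ g (p * q) hpos (hg ▸ pow_orderOf_eq_one g) ω hω
  have hodd : ∀ {r : ℕ}, r.Prime → 5 ≤ r → Odd r := fun hr h5 => hr.odd_of_ne_two (by omega)
  have hf1 : f.eval 1 = d := by
    have h := hf 0
    rw [pow_zero, pow_zero, ← hd, ← map_one (algebraMap ℤ ℂ), aeval_algebraMap_apply,
      coe_aeval_eq_eval] at h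
    simpa using h.symm
  have key : ∀ {s m : ℕ}, p * q = s * m → 1 < m → Odd m →
      ∃ (c₁ c₂ : ℤ) (i j : ℕ), |c₁| + |c₂| ≤ 2 ∧
        cyclotomic m ℤ ∣ f - (C c₁ * X ^ i + C c₂ * X ^ j) := by
    intro s m hsm hm1 hm
    have hs : 0 < s := Nat.pos_of_ne_zero (by rintro rfl; simp at hsm; omega)
    have hω' : IsPrimitiveRoot (ω ^ s) m := hω.pow hpos hsm
    have hne : g ^ s ≠ 1 := by
      intro h
      have h2 := Nat.le_of_dvd hs (orderOf_dvd_of_pow_eq_one h)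
      rw [hg, hsm] at h2
      nlinarith
    obtain ⟨u, v, n, hn, hu, hv, huv⟩ := exists_two_roots (hval _ hne)
    rw [hf s] at huv
    obtain ⟨c₁, c₂, i, j, hc, h⟩ := normal_form hm hω' hn hu hv huv
    refine ⟨c₁, c₂, i, j, hc, cyclotomic_dvd_of_aeval hm.pos hω' ?_⟩
    rw [map_sub, h]
    simp
  have hop := hodd hp hp5
  have hoq := hodd hq hq5
  obtain ⟨c₁, c₂, i, j, hc, hE⟩ := key (s := 1) (m := p * q) (by ring) (by nlinarith) (hop.mul hoq)
  obtain ⟨_, _, _, _, hcp, hDp⟩ := key (s := q) (m := p) (by ring) (by omega) hop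
  obtain ⟨_, _, _, _, hcq, hDq⟩ := key (s := p) (m := q) (by ring) (by omega) hoq
  rw [eq_coeff_sum hq hp hq5 hp5 (Ne.symm hpq) hc hcp hE hDp ha (hf1 ▸ hda),
    eq_coeff_sum hp hq hp5 hq5 hpq hc hcq (mul_comm p q ▸ hE) hDq hb (hf1 ▸ hdb)]
end
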